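/- With p, q ∈ ℚ[X] as in the context (the Belyi map of degree 77 for Aut(M_22)), the polynomial F = p − t·q ∈ K[X] has degree 77, is irreducible over K = ℚ(t), and its Galois group Polynomial.Gal F (the Galois group of the splitting field of F over K) has cardinality 887040, the order of Aut(M_22). -/

import Mathlib

open Polynomial

noncomputable section

def p : Polynomial ℚ :=
    2 ^ 22 * (X ^ 2 + X + 3) ^ 11 * (X ^ 5 - 3 * X ^ 4 - 14 * X ^ 3 + 15 * X ^ 2 + X - 1) ^ 11

def r : Polynomial ℚ :=
    -11 ^ 4 * (X ^ 4 + 2 * X ^ 3 + 7 * X ^ 2 - 16 * X - 2) ^ 4 * (X ^ 6 + 14 * X ^ 5 + 34 * X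
    ^ 4 + 8 * X ^ 3 - 30 * X ^ 2 + 60 * X + 16) ^ 4 * (4 * X ^ 6 + X ^ 5 + 15 * X ^ 4 + 10 * X
    ^ 3 - 10 * X ^ 2 - 2 * X - 2) ^ 4 * (16 * X ^ 6 - 29 * X ^ 5 + 71 * X ^ 4 - 136 * X ^ 3 +
    92 * X ^ 2 - 8 * X - 8) ^ 2

def q : Polynomial ℚ := p - r

/-- `F = p − t·q ∈ K[X]` where `K = ℚ(t)` and `t = RatFunc.X`. -/
def F : Polynomial (RatFunc ℚ) :=
  p.map (algebraMap ℚ (RatFunc ℚ)) - Polynomial.C RatFunc.X * q.map (algebraMap ℚ (RatFunc ℚ))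

end


theorem bel_exists_frob (K L : Type) [Field K] [Field L] [Algebra K L] [Algebra ℤ[X] K]
    [IsFractionRing ℤ[X] K] [Algebra ℤ[X] L] [IsScalarTower ℤ[X] K L] [FiniteDimensional K L]
    [IsGalois K L] (ℓ s0 : ℕ) (hl : ℓ.Prime) :
    ∃ (κ : Type) (_ : Field κ) (_ : CharP κ ℓ) (ψ : integralClosure ℤ[X] L →+* κ)
      (σ : L ≃ₐ[K] L), ψ (algebraMap ℤ[X] _ X) = s0 ∧
      ∀ x y : integralClosure ℤ[X] L, (y : L) = σ x → ψ y = ψ x ^ ℓ := by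
  have : Fact ℓ.Prime := ⟨hl⟩
  let S := integralClosure ℤ[X] L
  let : MulSemiringAction (L ≃ₐ[K] L) S := IsIntegralClosure.MulSemiringAction ℤ[X] K L S
  have : IsFractionRing S L := integralClosure.isFractionRing_of_finite_extension K L
  have : Algebra.IsInvariant ℤ[X] S (L ≃ₐ[K] L) := Algebra.isInvariant_of_isGalois ℤ[X] K L S
  have : Module.Finite ℤ[X] S := IsIntegralClosure.finite ℤ[X] K L S
  let e : ℤ[X] →+* ZMod ℓ := eval₂RingHom (Int.castRingHom (ZMod ℓ)) (s0 : ZMod ℓ)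
  have he : Function.Surjective e := fun a => ⟨C (a.val : ℤ), by simp [e]⟩
  let P : Ideal ℤ[X] := RingHom.ker e
  have : P.IsPrime := RingHom.ker_isPrime e
  let eq : ℤ[X] ⧸ P ≃+* ZMod ℓ := RingHom.quotientKerEquivOfSurjective he
  have : Finite (ℤ[X] ⧸ P) := Finite.of_equiv _ eq.symm.toEquiv
  have : FaithfulSMul ℤ[X] L := by
    rw [faithfulSMul_iff_algebraMap_injective, IsScalarTower.algebraMap_eq ℤ[X] K L]
    exact (algebraMap K L).injective.comp (IsFractionRing.injective ℤ[X] K)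
  have : FaithfulSMul ℤ[X] S := by
    rw [faithfulSMul_iff_algebraMap_injective]
    intro a b h
    exact FaithfulSMul.algebraMap_injective ℤ[X] L (congrArg (Subtype.val) h)
  obtain ⟨⟨Q, hQp, hQo⟩⟩ := P.nonempty_primesOver (S := S)
  have : Module.Finite (ℤ[X] ⧸ P) (S ⧸ Q) := by
    exact Module.Finite.of_restrictScalars_finite ℤ[X] _ _
  have : Finite (S ⧸ Q) := Module.finite_of_finite (ℤ[X] ⧸ P)
  have : SMulCommClass (L ≃ₐ[K] L) ℤ[X] S := ⟨fun g a x => map_smul (galRestrict ℤ[X] K L S g) a x⟩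
  obtain ⟨σ, hσ⟩ := IsArithFrobAt.exists_of_isInvariant ℤ[X] (L ≃ₐ[K] L) Q
  have : Q.IsMaximal := Ideal.Quotient.maximal_of_isField _ (Finite.isField_of_domain (S ⧸ Q))
  let : Field (S ⧸ Q) := Ideal.Quotient.field Q
  have hunder : Q.under ℤ[X] = P := hQo.over.symm
  have hmem : ∀ a : ℤ[X], e a = 0 → Ideal.Quotient.mk Q (algebraMap ℤ[X] S a) = 0 := by
    intro a ha
    rw [Ideal.Quotient.eq_zero_iff_mem]
    have : a ∈ Q.under ℤ[X] := by rw [hunder]; exact ha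
    exact this
  refine ⟨S ⧸ Q, inferInstance, ?_, Ideal.Quotient.mk Q, σ, ?_, ?_⟩
  · have h0 : ((ℓ : ℕ) : S ⧸ Q) = 0 := by
      have := hmem (ℓ : ℤ[X]) (by simp [e])
      simpa using this
    exact (CharP.charP_iff_prime_eq_zero hl).mpr h0
  · have := hmem (X - (s0 : ℤ[X])) (by simp [e])
    rw [map_sub, map_sub, sub_eq_zero] at this
    simpa using this
  · intro x y hy
    have hc : Nat.card (ℤ[X] ⧸ Q.under ℤ[X]) = ℓ := by
      rw [hunder, Nat.card_congr eq.toEquiv, Nat.card_zmod]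
    have h := hσ x
    have hxy : y = σ • x := by
      apply Subtype.ext
      rw [hy]
      exact (algebraMap_galRestrict_apply ℤ[X] σ x).symm
    rw [hxy, ← map_pow, Ideal.Quotient.eq, ← hc]
    exact h
namespace Bel

section lists
variable {T T' : Type*}

def gadd (add : T → T → T) : List T → List T → List T
  | [], m => m
  | a :: l, [] => a :: l
  | a :: l, b :: m => add a b :: gadd add l m

def gmul (z : T) (add mul : T → T → T) : List T → List T → List T
  | [], _ => []
  | a :: l, m => gadd add (m.map (mul a)) (z :: gmul z add mul l m)

/-- Horner evaluation. -/
def gev {R : Type*} [Zero R] [Add R] [Mul R] (l : List R) (y : R) : R :=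
  l.foldr (fun a s => a + y * s) 0

theorem map_gadd (φ : T → T') (add : T → T → T) (add' : T' → T' → T')
    (h : ∀ a b, φ (add a b) = add' (φ a) (φ b)) (l m : List T) :
    (gadd add l m).map φ = gadd add' (l.map φ) (m.map φ) := by
  induction l generalizing m with
  | nil => simp [gadd]
  | cons a l ih => cases m with
    | nil => simp [gadd]
    | cons b m => simp [gadd, ih, h]

theorem map_gmul (φ : T → T') (z : T) (z' : T') (add mul : T → T → T) (add' mul' : T' → T' → T')
    (hz : φ z = z') (h : ∀ a b, φ (add a b) = add' (φ a) (φ b))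
    (hm : ∀ a b, φ (mul a b) = mul' (φ a) (φ b)) (l m : List T) :
    (gmul z add mul l m).map φ = gmul z' add' mul' (l.map φ) (m.map φ) := by
  induction l with
  | nil => simp [gmul]
  | cons a l ih =>
    simp only [gmul, List.map_cons]
    rw [map_gadd φ add add' h, List.map_cons, ih, hz]
    congr 1
    simp [hm]

variable {R R' : Type*} [CommRing R] [CommRing R']

@[simp] theorem gev_nil (y : R) : gev [] y = 0 := rfl
@[simp] theorem gev_cons (a : R) (l : List R) (y : R) : gev (a :: l) y = a + y * gev l y := rfl

theorem gev_gadd (l m : List R) (y : R) : gev (gadd (· + ·) l m) y = gev l y + gev m y := by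
  induction l generalizing m with
  | nil => simp [gadd]
  | cons a l ih => cases m with
    | nil => simp [gadd]
    | cons b m => simp only [gadd, gev_cons, ih]; ring

theorem gev_smul (a : R) (l : List R) (y : R) : gev (l.map (a * ·)) y = a * gev l y := by
  induction l with
  | nil => simp
  | cons b l ih => simp only [List.map_cons, gev_cons, ih]; ring

theorem gev_gmul (l m : List R) (y : R) :
    gev (gmul 0 (· + ·) (· * ·) l m) y = gev l y * gev m y := by
  induction l with
  | nil => simp [gmul]
  | cons a l ih => simp only [gmul, gev_gadd, gev_cons, ih, gev_smul]; ring

theorem map_gev (φ : R →+* R') (l : List R) (y : R) : φ (gev l y) = gev (l.map φ) (φ y) := by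
  induction l with
  | nil => simp
  | cons a l ih => simp [ih]

/-- integer lists evaluated in a ring -/
def ev (l : List ℤ) (x : R) : R := l.foldr (fun (a : ℤ) (s : R) => (a : R) + x * s) 0

@[simp] theorem ev_nil (y : R) : ev [] y = 0 := rfl
@[simp] theorem ev_cons (a : ℤ) (l : List ℤ) (y : R) : ev (a :: l) y = a + y * ev l y := rfl

theorem ev_eq_gev (l : List ℤ) (x : R) : ev l x = gev (l.map (Int.cast : ℤ → R)) x := by
  induction l with
  | nil => simp
  | cons a l ih => simp [ih]

theorem map_ev (φ : R →+* R') (l : List ℤ) (y : R) : φ (ev l y) = ev l (φ y) := by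
  induction l with
  | nil => simp
  | cons a l ih => simp [ih]

def addZ : List ℤ → List ℤ → List ℤ := gadd (· + ·)
def mulZ : List ℤ → List ℤ → List ℤ := gmul 0 (· + ·) (· * ·)

theorem ev_addZ (l m : List ℤ) (x : R) : ev (addZ l m) x = ev l x + ev m x := by
  rw [ev_eq_gev, addZ, map_gadd _ _ (· + ·) (by simp), gev_gadd, ← ev_eq_gev, ← ev_eq_gev]

theorem ev_mulZ (l m : List ℤ) (x : R) : ev (mulZ l m) x = ev l x * ev m x := by
  rw [ev_eq_gev, mulZ, map_gmul _ 0 0 _ _ (· + ·) (· * ·) (by simp) (by simp) (by simp), gev_gmul,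
    ← ev_eq_gev, ← ev_eq_gev]

/-- bivariate evaluation: outer variable `y`, inner variable `x` -/
def ev2 (l : List (List ℤ)) (x y : R) : R := gev (l.map (fun a => ev a x)) y

def addZ2 : List (List ℤ) → List (List ℤ) → List (List ℤ) := gadd addZ
def mulZ2 : List (List ℤ) → List (List ℤ) → List (List ℤ) := gmul [] addZ mulZ

theorem rows_add (l m : List (List ℤ)) (x : R) : (addZ2 l m).map (fun a => ev a x) =
    gadd (· + ·) (l.map (fun a => ev a x)) (m.map (fun a => ev a x)) :=
  map_gadd _ _ _ (by simp [ev_addZ]) _ _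

theorem rows_mul (l m : List (List ℤ)) (x : R) : (mulZ2 l m).map (fun a => ev a x) =
    gmul 0 (· + ·) (· * ·) (l.map (fun a => ev a x)) (m.map (fun a => ev a x)) :=
  map_gmul (fun a => ev a x) [] 0 addZ mulZ (· + ·) (· * ·) rfl (by simp [ev_addZ]) (by simp [ev_mulZ]) _ _

theorem ev2_add (l m : List (List ℤ)) (x y : R) : ev2 (addZ2 l m) x y = ev2 l x y + ev2 m x y := by
  simp only [ev2, rows_add, gev_gadd]

theorem ev2_mul (l m : List (List ℤ)) (x y : R) : ev2 (mulZ2 l m) x y = ev2 l x y * ev2 m x y := by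
  simp only [ev2, rows_mul, gev_gmul]

theorem map_ev2 (φ : R →+* R') (l : List (List ℤ)) (x y : R) :
    φ (ev2 l x y) = ev2 l (φ x) (φ y) := by
  rw [ev2, ev2, map_gev, List.map_map]
  congr 1
  apply List.map_congr_left
  intro a _
  simp [map_ev]

/-- outer product `a(x) b(y)` -/
def outer (a b : List ℤ) : List (List ℤ) := b.map (fun c => a.map (c * ·))

theorem ev_smul (c : ℤ) (a : List ℤ) (x : R) : ev (a.map (c * ·)) x = c * ev a x := by
  induction a with
  | nil => simp
  | cons b l ih => simp only [List.map_cons, ev_cons, ih]; push_cast; ring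

theorem ev2_outer (a b : List ℤ) (x y : R) : ev2 (outer a b) x y = ev a x * ev b y := by
  induction b with
  | nil => simp [ev2, outer]
  | cons c b ih =>
    simp only [ev2, outer, List.map_cons, gev_cons, ev_cons, ev_smul] at ih ⊢
    rw [ih]; ring

/-! ### coefficient bounds -/
def Bd (c : ℤ) (l : List ℤ) : Prop := ∀ a ∈ l, |a| ≤ c
def Bd2 (c : ℤ) (l : List (List ℤ)) : Prop := ∀ a ∈ l, Bd c a

theorem bd_gadd {S : Type*} (P : ℤ → S → Prop) (add : S → S → S)
    (hmono : ∀ c d a, c ≤ d → P c a → P d a)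
    (hadd : ∀ c d a b, 0 ≤ c → 0 ≤ d → P c a → P d b → P (c + d) (add a b)) (c d : ℤ)
    (hc : 0 ≤ c) (hd : 0 ≤ d) (l m : List S) (hl : ∀ a ∈ l, P c a) (hm : ∀ a ∈ m, P d a) :
    ∀ a ∈ gadd add l m, P (c + d) a := by
  induction l generalizing m with
  | nil => intro a ha; exact hmono d _ _ (by omega) (hm a ha)
  | cons x l ih => cases m with
    | nil => intro a ha; exact hmono c _ _ (by omega) (hl a ha)
    | cons y m =>
      intro a ha
      simp only [gadd, List.mem_cons] at ha
      rcases ha with rfl | ha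
      · exact hadd _ _ _ _ hc hd (hl _ (by simp)) (hm _ (by simp))
      · exact ih m (fun a h => hl a (by simp [h])) (fun a h => hm a (by simp [h])) a ha

theorem bd_gmul {S : Type*} (P : ℤ → S → Prop) (z : S) (add mul : S → S → S) (N : ℤ)
    (hz : P 0 z) (hmono : ∀ c d a, c ≤ d → P c a → P d a)
    (hadd : ∀ c d a b, 0 ≤ c → 0 ≤ d → P c a → P d b → P (c + d) (add a b))
    (hN : 0 ≤ N) (l m : List S) (hc : ∀ a ∈ l, ∀ b ∈ m, P N (mul a b)) (n : ℕ) (hn : l.length ≤ n) :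
    ∀ a ∈ gmul z add mul l m, P (n * N) a := by
  induction l generalizing n with
  | nil => intro a ha; simp [gmul] at ha
  | cons x l ih =>
    obtain _ | n := n
    · simp at hn
    simp only [List.length_cons] at hn
    have h1 := ih (fun a h => hc a (by simp [h])) n (by omega)
    have e : ((n + 1 : ℕ) : ℤ) * N = N + n * N := by push_cast; ring
    rw [e]
    have hnN : 0 ≤ (n : ℤ) * N := by positivity
    simp only [gmul]
    apply bd_gadd P add hmono hadd _ _ hN hnN
    · intro a ha
      obtain ⟨b, hb, rfl⟩ := List.mem_map.1 ha
      exact hc _ (by simp) _ hb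
    · intro a ha
      rcases List.mem_cons.1 ha with rfl | ha
      · exact hmono _ _ _ hnN hz
      · exact h1 a ha

theorem Bd.mono {c d : ℤ} {l : List ℤ} (h : c ≤ d) (hl : Bd c l) : Bd d l :=
  fun a ha => (hl a ha).trans h

theorem bd_addZ (c d : ℤ) (l m : List ℤ) (hc : 0 ≤ c) (hd : 0 ≤ d) (hl : Bd c l) (hm : Bd d m) :
    Bd (c + d) (addZ l m) :=
  bd_gadd (fun c a => |a| ≤ c) _ (fun _ _ _ h h' => h'.trans h)
    (fun _ _ a b _ _ ha hb => (abs_add_le a b).trans (add_le_add ha hb)) c d hc hd l m hl hm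

theorem bd_mulZ (c d : ℤ) (n : ℕ) (l m : List ℤ) (hc : 0 ≤ c) (hd : 0 ≤ d) (hn : l.length ≤ n)
    (hl : Bd c l) (hm : Bd d m) : Bd (n * (c * d)) (mulZ l m) :=
  bd_gmul (fun c a => |a| ≤ c) _ _ _ (c * d) (by simp) (fun _ _ _ h h' => h'.trans h)
    (fun _ _ a b _ _ ha hb => (abs_add_le a b).trans (add_le_add ha hb)) (by positivity) l m
    (fun a ha b hb => by
      rw [abs_mul]; exact mul_le_mul (hl a ha) (hm b hb) (abs_nonneg _) hc) n hn

theorem bd2_add (c d : ℤ) (l m : List (List ℤ)) (hc : 0 ≤ c) (hd : 0 ≤ d) (hl : Bd2 c l)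
    (hm : Bd2 d m) : Bd2 (c + d) (addZ2 l m) :=
  bd_gadd Bd _ (fun _ _ _ h h' => h'.mono h)
    (fun _ _ _ _ hc hd ha hb => bd_addZ _ _ _ _ hc hd ha hb) c d hc hd l m hl hm

theorem bd2_mul (c d : ℤ) (n k : ℕ) (l m : List (List ℤ)) (hc : 0 ≤ c) (hd : 0 ≤ d)
    (hn : l.length ≤ n) (hk : ∀ a ∈ l, a.length ≤ k) (hl : Bd2 c l) (hm : Bd2 d m) :
    Bd2 (n * (k * (c * d))) (mulZ2 l m) :=
  bd_gmul Bd _ _ _ (k * (c * d)) (by intro a; simp) (fun _ _ _ h h' => h'.mono h)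
    (fun _ _ _ _ hc hd ha hb => bd_addZ _ _ _ _ hc hd ha hb) (by positivity) l m
    (fun a ha b hb => bd_mulZ _ _ _ _ _ hc hd (hk a ha) (hl a ha) (hm b hb)) n hn

theorem bd2_outer (c d : ℤ) (l m : List ℤ) (hc : 0 ≤ c) (hl : Bd c l) (hm : Bd d m) :
    Bd2 (c * d) (outer l m) := by
  intro a ha
  obtain ⟨x, hx, rfl⟩ := List.mem_map.1 ha
  intro b hb
  obtain ⟨y, hy, rfl⟩ := List.mem_map.1 hb
  rw [abs_mul, mul_comm]
  exact mul_le_mul (hl _ hy) (hm _ hx) (abs_nonneg _) hc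

theorem zero_of_ev (M c : ℤ) (hM : 2 * c < M) (l : List ℤ) (hl : Bd c l) (h : ev l M = 0) :
    ∀ a ∈ l, a = 0 := by
  induction l with
  | nil => simp
  | cons a l ih =>
    have ha : |a| ≤ c := hl a (by simp)
    have hc : 0 ≤ c := (abs_nonneg a).trans ha
    simp only [ev_cons, Int.cast_id] at h
    have hdvd : M ∣ a := ⟨-ev l M, by linarith⟩
    have a0 : a = 0 := Int.eq_zero_of_abs_lt_dvd hdvd (by omega)
    subst a0
    have hM0 : M ≠ 0 := by omega
    have : ev l M = 0 := by simpa [hM0] using h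
    intro b hb
    rcases List.mem_cons.1 hb with rfl | hb
    · rfl
    · exact ih (fun x hx => hl x (by simp [hx])) this b hb

theorem ev_of_zero (l : List ℤ) (h : ∀ a ∈ l, a = 0) (x : R) : ev l x = 0 := by
  induction l with
  | nil => simp
  | cons a l ih =>
    rw [ev_cons, h a (by simp), ih (fun x hx => h x (by simp [hx]))]; simp

theorem ev2_zero (M c : ℤ) (hM : 2 * c < M) (l : List (List ℤ)) (hl : Bd2 c l)
    (h : ∀ a ∈ l.map (fun a => ev a M), a = 0) (x y : R) : ev2 l x y = 0 := by
  induction l with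
  | nil => simp [ev2]
  | cons a l ih =>
    have h1 := ev_of_zero a (zero_of_ev M c hM a (hl a (by simp)) (h _ (by simp))) x
    have h2 := ih (fun b hb => hl b (by simp [hb]))
      (fun b hb => h b (by rw [List.map_cons]; exact List.mem_cons_of_mem _ hb))
    simp only [ev2, List.map_cons, gev_cons] at h2 ⊢
    rw [h1, h2]; simp

end lists

def PL : List ℤ := [-177147, 1299078, 24898995, -203089194, -1511765937, 14345670240,
  50183198703, -603052234191, -895515122898, 16704849847356, 3827234964036, -318311930813413,
  213859696194078, 4212671730491576, -5945793706585447, -37882143716621204, 80957886205508004,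
  214577400605416244, -665155144537587121, -589080737957315978, 3259990422563189249,
  -541943625331541499, -8066909250977821859, 7282838611356909161, 3583245095261619678,
  -5395942555161399912, 9247286074733978106, -29019060222509680521, 32976634010958423258,
  -22070433284494519166, 28391275717645214121, -25923966767871854330, 7859218448707993477,
  -8818004902326109582, 8862472304563676634, 2275121969071501396, 393756346083649120,
  -2470034541520030903, -2444737195045258762, 31798004414501094, 965654173470891894,
  1012502093606606768, 208283219666288492, -287812060159120926, -315497911685717978,
  -128846391873660428, 32719443039076904, 68565233514262826, 39367101577942512,
  6154467706493106, -7258670846697490, -6305234199572044, -2302444897963122, -36636554245016,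
  401985567641152, 202803984283436, 32248640744573, -15529780931544, -10397904602745,
  -1875004499170, 539104592807, 378271014792, 53136230455, -22279771811, -9526933108,
  -270803632, 686996550, 136216311, -33258016, -10772608, 1434543, 456610, -58289, -10186,
  1672, 66, -22, 1]

def rL : List ℤ := [-15720654045184, -833194664394752, -19192953507414016, -251386031213903872,
  -2050273023868534784, -10611547103643566080, -32545628861231005696, -34186423982694072320,
  173202739116686180352, 917550118074726219776, 1641637356179034210304,
  -1532854271203477815296, -13646639423059336691712, -23551217333797289590784,
  18126735316725396275200, 153447565358442734551040, 165557647183143951380480,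
  -351880426027149328539648, -1009675857827884409327616, -523957354172406311190528,
  4169240043383661667829760, 3936148979310044671741952, -11590334117619073908191232,
  -1893425005330941750272000, -19879606886793193776724224, 95380373568275730444888576,
  -40309451851469472868717312, -218530202417026807334241280, 316591467435676975060870912,
  13303810230281738664054272, -369883146850795339760556800, 280398297745314360305306624,
  54131219255598733234218496, -187548635367984092779506688, 101112883898735281598558720,
  -11313464510357894500425216, -21798146175538563829140736, 29529244234087495072136192,
  -15601324342307070868571136, -2570846821191277412943104, 4230053672807902715950240,
  37039021280626012373440, 150943653490336221829600, -61781891781863414712320,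
  -678028809723716250056928, 69455644132009632432320, 195511641774942973889376,
  83191516717920405465792, -20045658242563594001152, -56935940802045272121088,
  -32099841663128475784416, 6126602953489224280096, 17805013458490727942616,
  11852034239762530329296, 2352134668350758637984, -2621488263576748112272,
  -3003429684667201551641, -1552376159910019548918, -308662382385079017955,
  211524055280885450180, 250175970275155055967, 139575303116833514678, 46697115985267818125,
  4213011631477088440, -6371335113608797475, -5341292907164633386, -2660567796483122977,
  -999286278391382300, -300500000274352219, -73499952143852454, -14595198607385737,
  -2314814340568048, -284938070357600, -25889954379520, -1600380770560, -58890084352,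
  -959512576]

def AL : List (List ℤ) := [[256, 448, -1112, 20040, -3500, -108276, 455796, -622732, 377432,
  -483296, 113322, 171518, 120345, 72719, 16925, -477, 16], [448, -16640, -49136, 212456,
  -423696, -1516248, 7004096, -5020224, -236588, -2986016, 1129348, 1008914, 544110, 247502,
  -41862, -21072, 512], [-1112, -49136, 161132, 1254932, -4159312, -8016964, 25088184,
  -8304208, -5498372, 1078440, -467203, -1226271, -1338489, -1099057, -629668, -51376, 5920],
  [20040, 212456, 1254932, 846840, -6527824, 6212164, -14475626, -10320772, 30801980, 11500500,
  -4788982, -3129416, -2611880, -1967246, 195568, 249842, 27328], [-3500, -423696, -4159312,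
  -6527824, 38939180, 56462562, -154126566, 29046336, 39917273, -51879905, 33238898, 17473243,
  9274929, 5571098, 3064324, 356652, 22136], [-108276, -1516248, -8016964, 6212164, 56462562,
  -155777872, 25864608, 334846754, -259433592, 19646792, -12168794, -47300952, -19468432,
  -3592994, -2456208, -903316, -108256], [455796, 7004096, 25088184, -14475626, -154126566,
  25864608, 462444455, -522615577, 3728010, 218299609, -31240143, 21042846, 26633090, 6594830,
  -298210, 9614, 44792], [-622732, -5020224, -8304208, -10320772, 29046336, 334846754,
  -522615577, -100891010, 471165288, -146156626, -83403243, 25860956, -7062154, -8611405,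
  -2003914, 22715, 9328], [377432, -236588, -5498372, 30801980, 39917273, -259433592, 3728010,
  471165288, -149572093, -218205713, 91785155, 22290807, -9706081, 739167, 1566059, 349767,
  10945], [-483296, -2986016, 1078440, 11500500, -51879905, 19646792, 218299609, -146156626,
  -218205713, 118040340, 67839255, -31669011, -4352810, 2576266, 542916, -6061, -6248],
  [113322, 1129348, -467203, -4788982, 33238898, -12168794, -31240143, -83403243, 91785155,
  67839255, -50466075, -18911079, 6676769, 1234761, -7711, -19206, -2068], [171518, 1008914,
  -1226271, -3129416, 17473243, -47300952, 21042846, 25860956, 22290807, -31669011, -18911079,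
  11824550, 4301384, -587844, -71222, -11283, -760], [120345, 544110, -1338489, -2611880,
  9274929, -19468432, 26633090, -7062154, -9706081, -4352810, 6676769, 4301384, -1468554,
  -615952, 17322, -3050, 254], [72719, 247502, -1099057, -1967246, 5571098, -3592994, 6594830,
  -8611405, 739167, 2576266, 1234761, -587844, -615952, 56732, 40710, -727, 136], [16925,
  -41862, -629668, 195568, 3064324, -2456208, -298210, -2003914, 1566059, 542916, -7711,
  -71222, 17322, 40710, 2099, -1036, 52], [-477, -21072, -51376, 249842, 356652, -903316, 9614,
  22715, 349767, -6061, -19206, -11283, -3050, -727, -1036, -178, 8], [16, 512, 5920, 27328,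
  22136, -108256, 44792, 9328, 10945, -6248, -2068, -760, 254, 136, 52, 8, 1]]
def gevI (l : List ℤ) (y : ℤ) : ℤ := l.foldr (fun a s => Int.add a (Int.mul y s)) 0

theorem gevI_eq (l : List ℤ) (y : ℤ) : ev l y = gevI l y := rfl

/-- the cofactor `B`, obtained by Kronecker substitution and exact integer division -/
def BN : ℕ :=
  let x : ℤ := 2 ^ 200
  let y : ℤ := 2 ^ 16000
  let a := gevI (AL.map (fun l => gevI l x)) y
  let n := gevI PL x * gevI rL y - gevI PL y * gevI rL x
  let o : List ℤ := List.replicate 61 1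
  (n / ((x - y) * a) + 2 ^ 199 * (gevI o x * gevI o y)).toNat

def digs (k : ℕ) : ℕ → ℕ → List ℕ
  | 0, _ => []
  | f + 1, n => n % 2 ^ k :: digs k f (n / 2 ^ k)

def BL : List (List ℤ) :=
  (digs 16000 61 BN).map (fun n => (digs 200 61 n).map (fun d => (d : ℤ) - 2 ^ 199))

def absLe (c : ℕ) (l : List ℤ) : Bool := l.all (fun a => Nat.ble a.natAbs c)

theorem bd_of_absLe (c : ℕ) (l : List ℤ) (h : absLe c l = true) : Bd c l := by
  intro a ha
  have := Nat.le_of_ble_eq_true (List.all_eq_true.1 h a ha)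
  rw [Int.abs_eq_natAbs]; exact_mod_cast this

theorem bd2_of_absLe (c : ℕ) (l : List (List ℤ)) (h : l.all (absLe c) = true) : Bd2 c l :=
  fun a ha => bd_of_absLe c a (List.all_eq_true.1 h a ha)

def EL : List (List ℤ) :=
  addZ2 (mulZ2 [[0, 1], [-1]] (mulZ2 AL BL))
    (addZ2 (outer PL (rL.map (-1 * ·))) (outer rL PL))

theorem bd_BL : BL.all (absLe (2 ^ 127)) = true := by decide +kernel
theorem bd_AL : AL.all (absLe (2 ^ 30)) = true := by decide +kernel
theorem bd_PL : absLe (2 ^ 70) PL = true := by decide +kernel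
theorem bd_rL : absLe (2 ^ 90) rL = true := by decide +kernel
theorem bd_rL' : absLe (2 ^ 90) (rL.map (-1 * ·)) = true := by decide +kernel
theorem len_AL : (AL.length ≤ 17) ∧ ∀ a ∈ AL, a.length ≤ 17 := by decide +kernel

def addI := gadd Int.add
def mulI := gmul 0 Int.add Int.mul

theorem rows_outer (a b : List ℤ) (x : ℤ) :
    (outer a b).map (fun l => ev l x) = b.map (fun c => c * ev a x) := by
  simp only [outer, List.map_map]
  apply List.map_congr_left
  intro c _
  simp [ev_smul]

theorem check_EL :
    (addI (mulI [2 ^ 200, -1] (mulI (AL.map (fun l => gevI l (2 ^ 200)))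
      (BL.map (fun l => gevI l (2 ^ 200)))))
      (addI ((rL.map (-1 * ·)).map (fun c => c * gevI PL (2 ^ 200)))
        (PL.map (fun c => c * gevI rL (2 ^ 200))))).all (fun a => a == 0) = true := by
  decide +kernel

theorem EL_zero {R : Type*} [CommRing R] (x y : R) : ev2 EL x y = 0 := by
  have b1 : Bd2 (((17 : ℕ) : ℤ) * ((17 : ℕ) * ((2 ^ 30 : ℕ) * (2 ^ 127 : ℕ)))) (mulZ2 AL BL) :=
    bd2_mul _ _ 17 17 _ _ (by positivity) (by positivity) len_AL.1 len_AL.2 (bd2_of_absLe _ _ bd_AL)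
      (bd2_of_absLe _ _ bd_BL)
  have b2 := bd2_mul 1 _ 2 2 [[0, 1], [-1]] _ (by norm_num) (by positivity) (by simp) (by simp)
    (by simp [Bd2, Bd]) b1
  have b3 := bd2_outer _ _ PL (rL.map (-1 * ·)) (by positivity) (bd_of_absLe _ _ bd_PL)
    (bd_of_absLe _ _ bd_rL')
  have b4 := bd2_outer _ _ rL PL (by positivity) (bd_of_absLe _ _ bd_rL) (bd_of_absLe _ _ bd_PL)
  have b5 := bd2_add _ _ _ _ (by positivity) (by positivity) b2
    (bd2_add _ _ _ _ (by positivity) (by positivity) b3 b4)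
  refine ev2_zero (2 ^ 200) _ (by norm_num) EL b5 ?_ x y
  have h := check_EL
  rw [List.all_eq_true] at h
  intro a ha
  have ha' : a ∈ (addI (mulI [2 ^ 200, -1] (mulI (AL.map (fun l => gevI l (2 ^ 200)))
      (BL.map (fun l => gevI l (2 ^ 200)))))
      (addI ((rL.map (-1 * ·)).map (fun c => c * gevI PL (2 ^ 200)))
        (PL.map (fun c => c * gevI rL (2 ^ 200))))) := by
    rw [EL, rows_add, rows_mul, rows_mul, rows_add, rows_outer, rows_outer] at ha
    have e : [[0, 1], [-1]].map (fun a : List ℤ => ev a (2 ^ 200 : ℤ)) = [2 ^ 200, -1] := by simp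
    rw [e] at ha
    exact ha
  simpa using h a ha'

theorem main_identity {R : Type*} [CommRing R] (x y : R) :
    (x - y) * ev2 AL x y * ev2 BL x y = ev PL x * ev rL y - ev PL y * ev rL x := by
  have h := EL_zero x y
  rw [EL, ev2_add, ev2_mul, ev2_mul, ev2_add, ev2_outer, ev2_outer, ev_smul] at h
  have e : ev2 [[0, 1], [-1]] x y = x - y := by simp [ev2]; ring
  rw [e] at h
  push_cast at h
  linear_combination h

attribute [irreducible] PL rL AL BL
section modl
variable {R : Type*} [CommRing R]

/-- natural number lists evaluated in a ring -/
def nev (l : List ℕ) (y : R) : R := l.foldr (fun (a : ℕ) (s : R) => (a : R) + y * s) 0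

@[simp] theorem nev_nil (y : R) : nev [] y = 0 := rfl
@[simp] theorem nev_cons (a : ℕ) (l : List ℕ) (y : R) : nev (a :: l) y = a + y * nev l y := rfl

/-- `a * l + m` modulo `n` -/
def axpy (n a : ℕ) : List ℕ → List ℕ → List ℕ
  | [], m => m
  | b :: l, [] => a * b % n :: axpy n a l []
  | b :: l, c :: m => (a * b + c) % n :: axpy n a l m

def mulN (n : ℕ) : List ℕ → List ℕ → List ℕ
  | [], _ => []
  | a :: l, m => axpy n a m (0 :: mulN n l m)

/-- multiplication by the variable modulo `Y ^ g.length = g` -/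
def mulX (n : ℕ) (g a : List ℕ) : List ℕ :=
  bif a.length.beq g.length then axpy n (a.getLastD 0) g (0 :: a.dropLast) else 0 :: a

def mulM (n : ℕ) (g : List ℕ) : List ℕ → List ℕ → List ℕ
  | [], _ => []
  | a :: l, m => axpy n a m (mulX n g (mulM n g l m))

def powM (n : ℕ) (g : List ℕ) : ℕ → List ℕ → ℕ → List ℕ
  | 0, _, _ => [1]
  | f + 1, a, e => bif e.beq 0 then [1] else
      let h := powM n g f (mulM n g a a) (e / 2)
      bif (e % 2).beq 1 then mulM n g a h else h

/-- `Y ^ (n ^ k)` -/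
def frobM (n : ℕ) (g : List ℕ) : ℕ → List ℕ
  | 0 => [0, 1]
  | k + 1 => powM n g n (frobM n g k) n

def derN (n : ℕ) : List ℕ → List ℕ
  | [] => []
  | _ :: l => axpy n 1 l (0 :: derN n l)

def isC (c : ℕ) : List ℕ → Bool
  | [] => c.beq 0
  | a :: l => a.beq c && l.all (fun b => b.beq 0)

theorem nev_of_isC (c : ℕ) (l : List ℕ) (h : isC c l = true) (y : R) : nev l y = c := by
  have h0 : ∀ l : List ℕ, l.all (fun b => b.beq 0) = true → nev l y = 0 := by
    intro l
    induction l with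
    | nil => simp
    | cons a l ih =>
      intro h
      rw [List.all_cons, Bool.and_eq_true] at h
      rw [nev_cons, Nat.eq_of_beq_eq_true h.1, ih h.2]; simp
  cases l with
  | nil => have := Nat.eq_of_beq_eq_true h; subst this; simp
  | cons a l =>
    simp only [isC, Bool.and_eq_true] at h
    rw [nev_cons, Nat.eq_of_beq_eq_true h.1, h0 l h.2]; simp

variable (n : ℕ) [CharP R n]

theorem cast_mod (a : ℕ) : ((a % n : ℕ) : R) = a := by
  conv_rhs => rw [← Nat.div_add_mod a n]
  simp

theorem nev_axpy (a : ℕ) (l m : List ℕ) (y : R) :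
    nev (axpy n a l m) y = a * nev l y + nev m y := by
  induction l generalizing m with
  | nil => simp [axpy]
  | cons b l ih => cases m with
    | nil => simp only [axpy, nev_cons, ih, cast_mod]; push_cast; simp; ring
    | cons c m => simp only [axpy, nev_cons, ih, cast_mod]; push_cast; ring

theorem nev_mulN (l m : List ℕ) (y : R) : nev (mulN n l m) y = nev l y * nev m y := by
  induction l with
  | nil => simp [mulN]
  | cons a l ih => simp only [mulN, nev_axpy, nev_cons, ih]; push_cast; ring

theorem nev_append (l m : List ℕ) (y : R) : nev (l ++ m) y = nev l y + y ^ l.length * nev m y := by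
  induction l with
  | nil => simp
  | cons a l ih => simp only [List.cons_append, nev_cons, ih, List.length_cons]; ring

theorem nev_mulX (g a : List ℕ) (y : R) (hy : y ^ g.length = nev g y) :
    nev (mulX n g a) y = y * nev a y := by
  unfold mulX
  cases h : a.length.beq g.length with
  | false => simp
  | true =>
    have hl := Nat.eq_of_beq_eq_true h
    simp only [cond_true, nev_axpy, nev_cons]
    rcases List.eq_nil_or_concat a with rfl | ⟨b, c, rfl⟩
    · simp at hl; simp
    · rw [List.concat_eq_append, List.getLastD_concat, List.dropLast_concat, nev_append]
      rw [← hy, ← hl]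
      simp only [List.concat_eq_append, List.length_append, List.length_singleton, nev_cons,
        nev_nil]
      push_cast
      ring

theorem nev_mulM (g a b : List ℕ) (y : R) (hy : y ^ g.length = nev g y) :
    nev (mulM n g a b) y = nev a y * nev b y := by
  induction a with
  | nil => simp [mulM]
  | cons a l ih => simp only [mulM, nev_axpy, nev_mulX n g _ y hy, ih, nev_cons]; ring

theorem nev_powM (g : List ℕ) (y : R) (hy : y ^ g.length = nev g y) (f : ℕ) (a : List ℕ) (e : ℕ)
    (he : e ≤ f) : nev (powM n g f a e) y = nev a y ^ e := by
  induction f generalizing a e with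
  | zero => obtain rfl : e = 0 := by omega
            simp [powM]
  | succ f ih =>
    unfold powM
    cases h : e.beq 0 with
    | true => obtain rfl := Nat.eq_of_beq_eq_true h; simp
    | false =>
      have h0 : e ≠ 0 := Nat.ne_of_beq_eq_false h
      have := ih (mulM n g a a) (e / 2) (by omega)
      rw [nev_mulM n g _ _ y hy, ← pow_two, ← pow_mul] at this
      simp only [cond_false]
      cases h' : (e % 2).beq 1 with
      | true =>
        have h1 := Nat.eq_of_beq_eq_true h'
        simp only [cond_true]
        rw [nev_mulM n g _ _ y hy, this, ← pow_succ']
        congr 1; omega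
      | false =>
        have h1 := Nat.ne_of_beq_eq_false h'
        simp only [cond_false]
        rw [this]
        congr 1; omega

theorem nev_frobM (g : List ℕ) (y : R) (hy : y ^ g.length = nev g y) (k : ℕ) :
    nev (frobM n g k) y = y ^ n ^ k := by
  induction k with
  | zero => simp [frobM]
  | succ k ih => rw [frobM, nev_powM n g y hy _ _ _ le_rfl, ih, ← pow_mul, pow_succ]

theorem nev_derN {κ : Type*} [Field κ] [CharP κ n] (l : List ℕ) :
    derivative (nev l (X : κ[X])) = nev (derN n l) (X : κ[X]) := by
  induction l with
  | nil => simp [derN]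
  | cons a l ih => simp only [nev_cons, derN, nev_axpy, ← ih]; simp

/-! reduction of the integral data -/
def redL (n : ℕ) (l : List ℤ) : List ℕ := l.map (fun a => (a % (n : ℤ)).toNat)

theorem cast_red (hn : n ≠ 0) (a : ℤ) : (((a % (n : ℤ)).toNat : ℕ) : R) = a := by
  have h1 : (((a % (n : ℤ)).toNat : ℤ) : R) = ((a % (n : ℤ) : ℤ) : R) := by
    rw [Int.toNat_of_nonneg (Int.emod_nonneg _ (by exact_mod_cast hn))]
  rw [Int.cast_natCast] at h1
  rw [h1]
  conv_rhs => rw [← Int.mul_ediv_add_emod a n]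
  simp

theorem nev_redL (hn : n ≠ 0) (l : List ℤ) (y : R) : nev (redL n l) y = ev l y := by
  induction l with
  | nil => simp [redL]
  | cons a l ih =>
    simp only [redL, List.map_cons, nev_cons, ev_cons] at ih ⊢
    rw [ih, cast_red n hn]

def fN (n s : ℕ) : List ℕ := axpy n s (redL n rL) (redL n PL)

def evN (n : ℕ) (l : List ℕ) (b : ℕ) : ℕ := l.foldr (fun a s => (a + b * s) % n) 0

theorem cast_evN (l : List ℕ) (b : ℕ) : ((evN n l b : ℕ) : R) = nev l (b : R) := by
  induction l with
  | nil => simp [evN]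
  | cons a l ih =>
    simp only [evN, List.foldr_cons, nev_cons] at ih ⊢
    rw [cast_mod, ← ih]; push_cast; rfl

def AN (n : ℕ) (b : ℕ) : List ℕ := AL.map (fun l => evN n (redL n l) b)

theorem nev_AN (hn : n ≠ 0) (b : ℕ) (y : R) : nev (AN n b) y = ev2 AL (b : R) y := by
  unfold AN ev2
  induction AL with
  | nil => simp
  | cons a l ih =>
    simp only [List.map_cons, nev_cons, gev_cons]
    rw [ih, cast_evN, nev_redL n hn]

def fev (s x : R) : R := ev PL x + s * ev rL x

theorem nev_fN (hn : n ≠ 0) (s : ℕ) (y : R) : nev (fN n s) y = fev (s : R) y := by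
  rw [fN, nev_axpy, nev_redL n hn, nev_redL n hn, fev]; ring

theorem map_fev {R' : Type*} [CommRing R'] (φ : R →+* R') (s x : R) :
    φ (fev s x) = fev (φ s) (φ x) := by simp [fev, map_ev]

def sepC (n s : ℕ) (u v : List ℕ) : Bool :=
  let f := fN n s
  isC 1 (axpy n 1 (mulN n u f) (mulN n v (derN n f)))

theorem sep_of_sepC {κ : Type*} [Field κ] [CharP κ n] (hn : n ≠ 0) (s : ℕ) (u v : List ℕ)
    (h : sepC n s u v = true) : (fev (C (s : κ)) (X : κ[X])).Separable := by
  have h1 := nev_of_isC 1 _ h (X : κ[X])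
  rw [nev_axpy, nev_mulN, nev_mulN, ← nev_derN, nev_fN n hn] at h1
  exact ⟨nev u X, nev v X, by rw [Nat.cast_one, one_mul, ← Polynomial.C_eq_natCast] at h1; exact h1⟩

end modl
section place

theorem degree_ev_lt {R : Type*} [CommRing R] (l : List ℤ) :
    (ev l (X : R[X])).degree < l.length := by
  induction l with
  | nil => simp
  | cons a l ih =>
    rw [ev_cons]
    refine lt_of_le_of_lt (degree_add_le _ _) (max_lt ?_ ?_)
    · refine lt_of_le_of_lt (b := 0) ?_ (by rw [List.length_cons]; exact_mod_cast Nat.succ_pos _)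
      rw [← C_eq_intCast]; exact degree_C_le
    · by_cases h : ev l (X : R[X]) = 0
      · rw [h]; simp
      · have : Nontrivial R := by
          rcases subsingleton_or_nontrivial R with h' | h'
          · exact absurd (Subsingleton.elim _ _) h
          · exact h'
        rw [mul_comm, degree_mul_X]
        rw [degree_eq_natDegree h] at ih ⊢
        rw [List.length_cons]
        exact_mod_cast Nat.succ_lt_succ (by exact_mod_cast ih)

theorem PL_eq : PL = PL.dropLast ++ [1] ∧ PL.dropLast.length = 77 ∧ rL.length = 77 := by
  decide +kernel

theorem ev_append {R : Type*} [CommRing R] (l m : List ℤ) (y : R) :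
    ev (l ++ m) y = ev l y + y ^ l.length * ev m y := by
  induction l with
  | nil => simp
  | cons a l ih => simp only [List.cons_append, ev_cons, ih, List.length_cons]; ring

theorem fev_eq {R : Type*} [CommRing R] (s : R) :
    ∃ g : R[X], g.degree < 77 ∧ fev (C s) (X : R[X]) = X ^ 77 + g := by
  obtain ⟨h1, h2, h3⟩ := PL_eq
  refine ⟨ev PL.dropLast X + C s * ev rL X, ?_, ?_⟩
  · refine lt_of_le_of_lt (degree_add_le _ _) (max_lt ?_ ?_)
    · have := degree_ev_lt (R := R) PL.dropLast
      rw [h2] at this; exact this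
    · have := degree_ev_lt (R := R) rL
      rw [h3] at this
      rw [← smul_eq_C_mul]
      exact lt_of_le_of_lt (degree_smul_le _ _) this
  · rw [fev, h1, ev_append, h2, ← h1]
    simp; ring

theorem fev_monic {R : Type*} [CommRing R] (s : R) : (fev (C s) (X : R[X])).Monic := by
  obtain ⟨g, hg, h⟩ := fev_eq s
  rw [h]
  exact monic_X_pow_add hg

theorem fev_natDegree {R : Type*} [CommRing R] [Nontrivial R] (s : R) :
    (fev (C s) (X : R[X])).natDegree = 77 := by
  obtain ⟨g, hg, h⟩ := fev_eq s
  rw [h]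
  apply natDegree_eq_of_degree_eq_some
  rw [degree_add_eq_left_of_degree_lt (by rwa [degree_X_pow]), degree_X_pow]

theorem map_fevX {R R' : Type*} [CommRing R] [CommRing R'] (φ : R →+* R') (s : R) :
    (fev (C s) (X : R[X])).map φ = fev (C (φ s)) X := by
  have := map_fev (mapRingHom φ) (C s) X
  simpa using this

theorem eval_fevX {R : Type*} [CommRing R] (s x : R) : (fev (C s) (X : R[X])).eval x = fev s x := by
  have := map_fev (evalRingHom x) (C s) X
  simpa using this

structure IsPl {K L κ : Type} [Field K] [Field L] [Algebra K L] [Field κ] (s : L) (ℓ s0 : ℕ)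
    (φ : L → κ) (σ : L ≃ₐ[K] L) : Prop where
  char : CharP κ ℓ
  root : ∀ α, fev s α = 0 → fev (s0 : κ) (φ α) = 0
  inj : ∀ α β, fev s α = 0 → fev s β = 0 → φ α = φ β → α = β
  surj : ∀ y, fev (s0 : κ) y = 0 → ∃ α, fev s α = 0 ∧ φ α = y
  adj : ∀ α β, fev s α = 0 → fev s β = 0 → (ev2 AL α β = 0 ↔ ev2 AL (φ α) (φ β) = 0)
  frob : ∀ α, fev s α = 0 → φ (σ α) = φ α ^ ℓ

def P7L : List ℤ := [-3, 2, 45, -26, -8, -14, -2, 1]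

theorem P7_list : PL = (List.replicate 11 P7L).foldr mulZ [1] := by decide +kernel

theorem P7_eq {R : Type*} [CommRing R] (x : R) : ev PL x = ev P7L x ^ 11 := by
  have : ∀ n, ev ((List.replicate n P7L).foldr mulZ [1]) x = ev P7L x ^ n := by
    intro n
    induction n with
    | zero => simp
    | succ n ih => rw [List.replicate_succ, List.foldr_cons, ev_mulZ, ih, pow_succ']
  rw [P7_list, this]

theorem w_eq : ∃ w : List ℤ, rL = (mulZ w w).map (-1 * ·) := 
  ⟨[-3964928, -105070592, -1028155392, -4455092224, -7184387584, 7470853632, 63761246208, 134495995392, -141819178688, -590789798720, -167790332160, 132035091584, 5996819479728, -8409833005552, -3306874020560, 14057129436240, -7492925915728, -3942782945904, 4719778026128, -1431251963504, 648309794264, -200540439000, -386458164488, 84202311512, 198809212140, 66522042708, 9201276568, -38127513336, -31467394189, -12497223519, -698667189, 2533951145, 2109463301, 981380543, 324767025, 72755243, 11247192, 950576, 30976], by decide +kernel⟩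

theorem rL_eq_zero {κ : Type} [Field κ] (s c : κ) (hsep : (fev (C s) (X : κ[X])).Separable)
    (h : fev s c = 0) : ev rL c ≠ 0 := by
  intro hr
  obtain ⟨w, hw⟩ := w_eq
  have hP : ev PL c = 0 := by rw [fev, hr] at h; simpa using h
  have hP7 := P7_eq c
  have hP7' := P7_eq (X : κ[X])
  rw [hP] at hP7
  have h7 : ev P7L c = 0 := by simpa using hP7.symm
  have hrw := ev_smul (R := κ) (-1) (mulZ w w) c
  rw [← hw, hr, ev_mulZ] at hrw
  have hw0 : ev w c = 0 := by simpa using hrw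
  have hrX := ev_smul (R := κ[X]) (-1) (mulZ w w) X
  rw [← hw, ev_mulZ] at hrX
  have e1 : ∀ l : List ℤ, (ev l (X : κ[X])).eval c = ev l c := by
    intro l
    have := map_ev (evalRingHom c) l X
    simpa using this
  apply hsep.eval₂_derivative_ne_zero (RingHom.id κ) (x := c)
  · rw [eval₂_id, eval_fevX, h]
  · rw [eval₂_id, fev, hP7', hrX]
    simp [e1, h7, hw0, derivative_pow]

theorem no_common {κ : Type} [Field κ] (s c d : κ) (hsep : (fev (C s) (X : κ[X])).Separable)
    (hc : fev s c = 0) (hd : fev s d = 0) (hA : ev2 AL c d = 0) (hB : (c - d) * ev2 BL c d = 0) :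
    False := by
  have h := main_identity (C c) (X : κ[X])
  have e : ev PL (C c) * ev rL X - ev PL X * ev rL (C c) = - C (ev rL c) * fev (C s) X := by
    have e1 : ev PL (C c) = C (ev PL c) := (map_ev C PL c).symm
    have e2 : ev rL (C c) = C (ev rL c) := (map_ev C rL c).symm
    have e3 : ev PL c = - s * ev rL c := by rw [fev] at hc; linear_combination hc
    rw [e1, e2, e3, fev]; simp; ring
  rw [e] at h
  have h2 := congrArg (fun q => (derivative q).eval d) h
  have eA : (ev2 AL (C c) (X : κ[X])).eval d = ev2 AL c d := by
    have := map_ev2 (evalRingHom d) AL (C c) X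
    simpa using this
  have eB : (ev2 BL (C c) (X : κ[X])).eval d = ev2 BL c d := by
    have := map_ev2 (evalRingHom d) BL (C c) X
    simpa using this
  simp only [derivative_mul, derivative_neg, derivative_C, eval_add, eval_mul, eval_neg, eval_C,
    eval_sub, eval_X, eA, eB, hA, neg_zero, zero_mul, mul_zero, zero_add, add_zero] at h2
  have h3 : (derivative (fev (C s) (X : κ[X]))).eval d ≠ 0 := by
    have := hsep.eval₂_derivative_ne_zero (RingHom.id κ) (x := d) (by rw [eval₂_id, eval_fevX, hd])
    rwa [eval₂_id] at this
  have h4 := rL_eq_zero s c hsep hc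
  have h5 : (c - d) * eval d (derivative (ev2 AL (C c) X)) * ev2 BL c d = 0 := by
    linear_combination eval d (derivative (ev2 AL (C c) X)) * hB
  rw [h5] at h2
  have : ev rL c * (derivative (fev (C s) (X : κ[X]))).eval d = 0 := by linear_combination h2
  exact mul_ne_zero h4 h3 this

theorem exists_place (K L : Type) [Field K] [Field L] [Algebra K L] [Algebra ℤ[X] K]
    [IsFractionRing ℤ[X] K] [Algebra ℤ[X] L] [IsScalarTower ℤ[X] K L] [FiniteDimensional K L]
    [IsGalois K L] (s : L) (hs : s = algebraMap ℤ[X] L X)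
    (hsplit : (fev (C s) (X : L[X])).Splits) (ℓ s0 : ℕ) (hl : ℓ.Prime) (u v : List ℕ)
    (hsep : sepC ℓ s0 u v = true) :
    ∃ (κ : Type) (_ : Field κ) (φ : L → κ) (σ : L ≃ₐ[K] L), IsPl s ℓ s0 φ σ := by
  obtain ⟨κ, _, _, ψ, σ, hψ, hσ⟩ := bel_exists_frob K L ℓ s0 hl
  have sep : (fev (C (s0 : κ)) (X : κ[X])).Separable := sep_of_sepC ℓ hl.ne_zero s0 u v hsep
  have hint : ∀ α : L, fev s α = 0 → α ∈ (integralClosure ℤ[X] L) := by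
    intro α h
    refine ⟨fev (C X) X, fev_monic _, ?_⟩
    rw [← eval_map, map_fevX, ← hs, eval_fevX, h]
  classical
  let φ : L → κ := fun α => if h : α ∈ (integralClosure ℤ[X] L) then ψ ⟨α, h⟩ else 0
  have hφ : ∀ α : (integralClosure ℤ[X] L), φ α = ψ α := fun α => by simp [φ, α.2]
  let sS : (integralClosure ℤ[X] L) := algebraMap ℤ[X] (integralClosure ℤ[X] L) X
  have hsS : (sS : L) = s := by rw [hs]; rfl
  have hval : ∀ a : (integralClosure ℤ[X] L), (integralClosure ℤ[X] L).val a = (a : L) := fun _ => rfl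
  have hroot : ∀ α : (integralClosure ℤ[X] L), fev s (α : L) = 0 → fev sS α = 0 := by
    intro α h
    apply Subtype.ext
    have := map_fev ((integralClosure ℤ[X] L).val : (integralClosure ℤ[X] L) →+* L) sS α
    simp only [RingHom.coe_coe, hval, hsS] at this
    rw [this, h]; rfl
  -- roots
  let fL := fev (C s) (X : L[X])
  have hmem : ∀ a ∈ fL.roots, a ∈ (integralClosure ℤ[X] L) := by
    intro a ha
    apply hint
    have := (mem_roots (fev_monic s).ne_zero).1 ha
    rwa [IsRoot.def, eval_fevX] at this
  let m : Multiset (integralClosure ℤ[X] L) := fL.roots.pmap Subtype.mk hmem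
  have hm : m.map (fun a : (integralClosure ℤ[X] L) => (a : L)) = fL.roots := by
    simp only [m, Multiset.map_pmap]; rw [Multiset.pmap_eq_map, Multiset.map_id']
  have hfL : fL = (fL.roots.map (fun a => X - C a)).prod := by
    exact hsplit.eq_prod_roots_of_monic (fev_monic s)
  have hfS : fev (C sS) (X : (integralClosure ℤ[X] L)[X]) = (m.map (fun a => X - C a)).prod := by
    apply Polynomial.map_injective ((integralClosure ℤ[X] L).val : (integralClosure ℤ[X] L) →+* L) Subtype.val_injective
    rw [map_fevX, Polynomial.map_multiset_prod, Multiset.map_map]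
    simp only [RingHom.coe_coe, hval, hsS]
    change fL = _
    conv_lhs => rw [hfL, ← hm, Multiset.map_map]
    congr 1
    apply Multiset.map_congr rfl
    intro a _
    simp
  have hfk : fev (C (s0 : κ)) (X : κ[X]) = ((m.map ψ).map (fun a => X - C a)).prod := by
    rw [← hψ, ← map_fevX ψ, hfS, Polynomial.map_multiset_prod, Multiset.map_map, Multiset.map_map]
    congr 1
    apply Multiset.map_congr rfl
    intro a _
    simp
  have hrk : (fev (C (s0 : κ)) (X : κ[X])).roots = m.map ψ := by
    rw [hfk, roots_multiset_prod_X_sub_C]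
  have hnd : (m.map ψ).Nodup := by rw [← hrk]; exact nodup_roots sep
  have hmm : ∀ α : (integralClosure ℤ[X] L), fev s (α : L) = 0 → α ∈ m := by
    intro α h
    have : (α : L) ∈ fL.roots := by
      rw [mem_roots (fev_monic s).ne_zero, IsRoot.def, eval_fevX, h]
    rw [Multiset.mem_pmap]
    exact ⟨α, this, rfl⟩
  have hr : ∀ α, fev s α = 0 → fev (s0 : κ) (φ α) = 0 := by
    intro α h
    have h1 := hroot ⟨α, hint α h⟩ h
    have h2 := map_fev ψ sS ⟨α, hint α h⟩
    rw [h1, map_zero, hψ] at h2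
    rw [hφ ⟨α, hint α h⟩, ← h2]
  refine ⟨κ, inferInstance, φ, σ, inferInstance, hr, ?_, ?_, ?_, ?_⟩
  · intro α β ha hb h
    rw [hφ ⟨α, hint α ha⟩, hφ ⟨β, hint β hb⟩] at h
    have := Multiset.inj_on_of_nodup_map hnd _ (hmm ⟨α, hint α ha⟩ ha) _ (hmm ⟨β, hint β hb⟩ hb) h
    exact congrArg Subtype.val this
  · intro y hy
    have : y ∈ (fev (C (s0 : κ)) (X : κ[X])).roots := by
      rw [mem_roots (fev_monic _).ne_zero, IsRoot.def, eval_fevX, hy]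
    rw [hrk, Multiset.mem_map] at this
    obtain ⟨a, ha, rfl⟩ := this
    refine ⟨a, ?_, hφ a⟩
    have h1 : (a : L) ∈ fL.roots := by rw [← hm]; exact Multiset.mem_map_of_mem _ ha
    have := (mem_roots (fev_monic s).ne_zero).1 h1
    rwa [IsRoot.def, eval_fevX] at this
  · intro α β ha hb
    rw [hφ ⟨α, hint α ha⟩, hφ ⟨β, hint β hb⟩]
    have e2 := fun l => map_ev2 ψ l ⟨α, hint α ha⟩ ⟨β, hint β hb⟩
    have e3 := fun l => map_ev2 ((integralClosure ℤ[X] L).val : (integralClosure ℤ[X] L) →+* L) l ⟨α, hint α ha⟩ ⟨β, hint β hb⟩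
    simp only [RingHom.coe_coe, hval] at e3
    constructor
    · intro h
      rw [← e2]
      have : ev2 AL (⟨α, hint α ha⟩ : (integralClosure ℤ[X] L)) ⟨β, hint β hb⟩ = 0 := Subtype.ext (by rw [e3, h]; rfl)
      rw [this, map_zero]
    · intro h
      by_contra hne
      have hi := main_identity α β
      have hz : ev PL α * ev rL β - ev PL β * ev rL α = 0 := by
        rw [fev] at ha hb
        linear_combination ev rL β * ha - ev rL α * hb
      rw [hz] at hi
      have hB : (α - β) * ev2 BL α β = 0 := by
        have : ev2 AL α β * ((α - β) * ev2 BL α β) = 0 := by linear_combination hi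
        exact (mul_eq_zero.1 this).resolve_left hne
      have hB' : ((⟨α, hint α ha⟩ : (integralClosure ℤ[X] L)) - ⟨β, hint β hb⟩) *
          ev2 BL (⟨α, hint α ha⟩ : (integralClosure ℤ[X] L)) ⟨β, hint β hb⟩ = 0 := by
        apply Subtype.ext
        have := e3 BL
        change (α - β) * _ = (0 : L)
        rw [this, hB]
      have hB2 := congrArg ψ hB'
      rw [map_mul, map_sub, e2, map_zero] at hB2
      have r1 := hr α ha
      have r2 := hr β hb
      rw [hφ ⟨α, hint α ha⟩] at r1
      rw [hφ ⟨β, hint β hb⟩] at r2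
      exact no_common _ _ _ sep r1 r2 h hB2
  · intro α ha
    have hs' : σ s = s := by
      rw [hs, IsScalarTower.algebraMap_apply ℤ[X] K L]
      exact σ.commutes _
    have hb : fev s (σ α) = 0 := by
      have := map_fev (σ : L →+* L) s α
      simp only [RingHom.coe_coe] at this
      rw [hs', ha, map_zero] at this
      exact this.symm
    rw [hφ ⟨α, hint α ha⟩, hφ ⟨σ α, hint _ hb⟩]
    exact hσ _ _ rfl

end place
section grp
variable {G Y T : Type*} [Group G] [MulAction G Y] [MulAction G T]

theorem orbit_dvd (a : G) (p k : ℕ) (hp : p.Prime) (n : ℕ) (D : Set Y) (hn : D.ncard = n)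
    (hfin : D.Finite)
    (hinv : ∀ y ∈ D, a • y ∈ D) (h1 : ∀ y ∈ D, a ^ p ^ (k + 1) • y = y)
    (h2 : ∀ y ∈ D, a ^ p ^ k • y ≠ y) : p ^ (k + 1) ∣ D.ncard := by
  induction n using Nat.strong_induction_on generalizing D with
  | _ n ih =>
  rcases D.eq_empty_or_nonempty with rfl | ⟨y, hy⟩
  · simp
  have : Fact p.Prime := ⟨hp⟩
  set N := p ^ (k + 1) with hN
  have hN0 : 0 < N := pow_pos hp.pos _
  have hmp : Function.minimalPeriod (a • ·) y = N := by
    apply Function.minimalPeriod_eq_prime_pow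
    · intro h
      apply h2 y hy
      have := h.eq
      rwa [smul_iterate] at this
    · have := h1 y hy
      change (a • ·)^[N] y = y
      rwa [smul_iterate]
  have hpow : ∀ i, ∀ z ∈ D, a ^ i • z ∈ D := by
    intro i
    induction i with
    | zero => intro z hz; simpa using hz
    | succ i ihi => intro z hz; rw [pow_succ', mul_smul]; exact hinv _ (ihi z hz)
  let Z : Set Y := (fun i => a ^ i • y) '' (Set.Iio N)
  have hZ : Z.ncard = N := by
    rw [Set.ncard_image_of_injOn]
    · rw [← Finset.coe_Iio, Set.ncard_coe_finset]; simp
    · intro i hi j hj h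
      have hi' : i < Function.minimalPeriod (a • ·) y := by rw [hmp]; exact hi
      have hj' : j < Function.minimalPeriod (a • ·) y := by rw [hmp]; exact hj
      have h' : (a • ·)^[i] y = (a • ·)^[j] y := by rw [smul_iterate, smul_iterate]; exact h
      exact (Function.iterate_eq_iterate_iff_of_lt_minimalPeriod hi' hj').1 h'
  have hZD : Z ⊆ D := by
    rintro _ ⟨i, -, rfl⟩; exact hpow i y hy
  have hZinv : ∀ z, z ∈ D → a • z ∈ Z → z ∈ Z := by
    rintro z hzD ⟨i, hi, h⟩
    rcases Nat.eq_zero_or_pos i with rfl | hi0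
    · refine ⟨N - 1, by simp [hN0], ?_⟩
      apply MulAction.injective a
      change a • a ^ (N - 1) • y = a • z
      rw [← h, ← mul_smul, ← pow_succ', Nat.sub_add_cancel hN0]
      simpa using h1 y hy
    · refine ⟨i - 1, lt_of_le_of_lt (Nat.sub_le _ _) hi, ?_⟩
      apply MulAction.injective a
      change a • a ^ (i - 1) • y = a • z
      rw [← h, ← mul_smul, ← pow_succ', Nat.sub_add_cancel hi0]
  have hd := Set.ncard_sdiff_add_ncard_of_subset hZD hfin
  have := ih (D \ Z).ncard (by omega) (D \ Z) rfl hfin.sdiff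
    (fun z hz => ⟨hinv z hz.1, fun h => hz.2 (hZinv z hz.1 h)⟩)
    (fun z hz => h1 z hz.1) (fun z hz => h2 z hz.1)
  rw [← hd, hZ]
  exact Dvd.dvd.add this dvd_rfl

variable (Cl : T → Set Y) {t0 : T} {y0 : Y}

theorem orb_sub (hC : ∀ (g : G) t y, y ∈ Cl t → g • y ∈ Cl (g • t))
    (hy0 : y0 ∈ Cl t0) : MulAction.orbit (MulAction.stabilizer G t0) y0 ⊆ Cl t0 := by
  rintro _ ⟨⟨g, hg⟩, rfl⟩
  have := hC g t0 y0 hy0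
  rw [MulAction.mem_stabilizer_iff.1 hg] at this
  exact this

theorem step_conj (hC : ∀ (g : G) t y, y ∈ Cl t → g • y ∈ Cl (g • t))
    (hy0 : y0 ∈ Cl t0) (hfin : (Cl t0).Finite) (t : T)
    (ht : t ∈ MulAction.orbit G t0) (τ : G) (hτ : τ • t = t) (p k : ℕ) (hp : p.Prime) (E : Set Y)
    (he : ∀ y, τ • y ∈ E → y ∈ E)
    (h1 : ∀ y ∈ Cl t, y ∉ E → τ ^ p ^ (k + 1) • y = y)
    (h2 : ∀ y ∈ Cl t, y ∉ E → τ ^ p ^ k • y ≠ y) :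
    ∃ g : G,
      p ^ (k + 1) ∣ (MulAction.orbit (MulAction.stabilizer G t0) y0 \ {y | g • y ∈ E}).ncard := by
  obtain ⟨g, rfl⟩ := ht
  have hmem : g⁻¹ * τ * g ∈ MulAction.stabilizer G t0 := by
    rw [MulAction.mem_stabilizer_iff, mul_smul, mul_smul]
    change g⁻¹ • τ • g • t0 = t0
    rw [show τ • g • t0 = g • t0 from hτ, inv_smul_smul]
  have hsub := orb_sub Cl hC hy0
  have hgC : ∀ y, y ∈ Cl t0 → g • y ∈ Cl (g • t0) := fun y hy => hC g _ _ hy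
  have hpw : ∀ n : ℕ, ∀ y : Y, (g⁻¹ * τ * g) ^ n • y = g⁻¹ • τ ^ n • g • y := by
    intro n y
    have : (g⁻¹ * τ * g) ^ n = g⁻¹ * τ ^ n * g := by
      have := conj_pow (i := n) (a := g⁻¹) (b := τ)
      simpa using this
    rw [this, mul_smul, mul_smul]
  refine ⟨g, ?_⟩
  apply orbit_dvd (g⁻¹ * τ * g) p k hp _ _ rfl (hfin.subset (Set.sdiff_subset.trans hsub))
  · rintro y ⟨hy, hne⟩
    refine ⟨?_, ?_⟩
    · obtain ⟨h, rfl⟩ := hy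
      refine ⟨⟨_, hmem⟩ * h, ?_⟩
      change (_ * _) • y0 = _
      rw [mul_smul]; rfl
    · intro h
      apply hne
      have h' : g • (g⁻¹ * τ * g) • y ∈ E := h
      rw [mul_smul, mul_smul, smul_inv_smul] at h'
      exact he _ h'
  · rintro y ⟨hy, hne⟩
    rw [hpw, h1 _ (hgC _ (hsub hy)) hne, inv_smul_smul]
  · rintro y ⟨hy, hne⟩ h
    rw [hpw, inv_smul_eq_iff] at h
    exact h2 _ (hgC _ (hsub hy)) hne h

theorem step_dvd (hC : ∀ (g : G) t y, y ∈ Cl t → g • y ∈ Cl (g • t))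
    (hy0 : y0 ∈ Cl t0) (hfin : (Cl t0).Finite) (t : T)
    (ht : t ∈ MulAction.orbit G t0) (τ : G) (hτ : τ • t = t) (p k : ℕ) (hp : p.Prime)
    (h1 : ∀ y ∈ Cl t, τ ^ p ^ (k + 1) • y = y ∧ τ ^ p ^ k • y ≠ y) :
    p ^ (k + 1) ∣ (MulAction.orbit (MulAction.stabilizer G t0) y0).ncard := by
  obtain ⟨g, h'⟩ := step_conj Cl hC hy0 hfin t ht τ hτ p k hp ∅ (fun _ h => h)
    (fun y hy _ => (h1 y hy).1) (fun y hy _ => (h1 y hy).2)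
  simpa using h'

theorem step_dvd_one (hC : ∀ (g : G) t y, y ∈ Cl t → g • y ∈ Cl (g • t))
    (hy0 : y0 ∈ Cl t0) (hfin : (Cl t0).Finite) (t : T)
    (ht : t ∈ MulAction.orbit G t0) (τ : G) (hτ : τ • t = t) (p k : ℕ) (hp : p.Prime) (e : Y)
    (he : τ • e = e)
    (h1 : ∀ y ∈ Cl t, y ≠ e → τ ^ p ^ (k + 1) • y = y ∧ τ ^ p ^ k • y ≠ y) :
    p ^ (k + 1) ∣ (MulAction.orbit (MulAction.stabilizer G t0) y0).ncard ∨
    p ^ (k + 1) ∣ (MulAction.orbit (MulAction.stabilizer G t0) y0).ncard - 1 := by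
  obtain ⟨g, h'⟩ := step_conj Cl hC hy0 hfin t ht τ hτ p k hp {e}
    (fun y h => by
      have h2 : τ • y = τ • e := by rw [he]; exact h
      exact smul_left_cancel _ h2)
    (fun y hy h => (h1 y hy h).1) (fun y hy h => (h1 y hy h).2)
  have hE : {y | g • y ∈ ({e} : Set Y)} = {g⁻¹ • e} := by
    ext y; simp [eq_inv_smul_iff]
  rw [hE] at h'
  by_cases hm : g⁻¹ • e ∈ MulAction.orbit (MulAction.stabilizer G t0) y0
  · right
    rwa [Set.ncard_sdiff_singleton_of_mem hm] at h'
  · left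
    rwa [Set.sdiff_singleton_eq_self hm] at h'

theorem card_step (t0 : T) (y0 : Y) : Nat.card (MulAction.stabilizer G t0) =
    (MulAction.orbit (MulAction.stabilizer G t0) y0).ncard *
      Nat.card (MulAction.stabilizer G (t0, y0)) := by
  have h1 := Nat.card_congr
      (MulAction.orbitProdStabilizerEquivGroup (MulAction.stabilizer G t0) y0)
  rw [Nat.card_prod] at h1
  rw [← h1]
  congr 1
  refine Nat.card_congr ⟨fun g => ⟨g.1.1, ?_⟩, fun g => ⟨⟨g.1, ?_⟩, ?_⟩, fun _ => rfl, fun _ => rfl⟩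
  · have e1 : g.1.1 • t0 = t0 := g.1.2
    have e2 : g.1.1 • y0 = y0 := g.2
    rw [MulAction.mem_stabilizer_iff, Prod.smul_mk, e1, e2]
  · have e := g.2
    rw [MulAction.mem_stabilizer_iff, Prod.smul_mk, Prod.mk.injEq] at e
    exact e.1
  · have e := g.2
    rw [MulAction.mem_stabilizer_iff, Prod.smul_mk, Prod.mk.injEq] at e
    exact e.2

theorem step_main (hC : ∀ (g : G) t y, y ∈ Cl t → g • y ∈ Cl (g • t))
    (hy0 : y0 ∈ Cl t0) (hfin : (Cl t0).Finite) (N : ℕ)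
    (hle : (Cl t0).ncard ≤ N)
    (hge : N ≤ (MulAction.orbit (MulAction.stabilizer G t0) y0).ncard) :
    (∀ t y, t ∈ MulAction.orbit G t0 → y ∈ Cl t → (t, y) ∈ MulAction.orbit G (t0, y0)) ∧
    Nat.card (MulAction.stabilizer G t0) = N * Nat.card (MulAction.stabilizer G (t0, y0)) := by
  have hsub := orb_sub Cl hC hy0
  have heq : MulAction.orbit (MulAction.stabilizer G t0) y0 = Cl t0 :=
    Set.eq_of_subset_of_ncard_le hsub (hle.trans hge) hfin
  have hN : (MulAction.orbit (MulAction.stabilizer G t0) y0).ncard = N :=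
    le_antisymm (by rw [heq]; exact hle) hge
  constructor
  · rintro t y ⟨g, rfl⟩ hy
    have h1 := hC g⁻¹ _ _ hy
    change g⁻¹ • y ∈ Cl (g⁻¹ • g • t0) at h1
    rw [inv_smul_smul, ← heq] at h1
    obtain ⟨⟨h, hh⟩, hhy⟩ := h1
    have hhy' : h • y0 = g⁻¹ • y := hhy
    refine ⟨g * h, ?_⟩
    change (g * h) • (t0, y0) = _
    rw [Prod.smul_mk, mul_smul, mul_smul, hhy', smul_inv_smul, MulAction.mem_stabilizer_iff.1 hh]
  · rw [card_step t0 y0, hN]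

end grp
section certs

/-- the polynomial `Y ^ g.length - g` -/
def facN (n : ℕ) (g : List ℕ) : List ℕ := g.map (fun a => n - a % n) ++ [1]

def prodG (n : ℕ) (gs : List (List ℕ × List ℕ)) : List ℕ :=
  gs.foldr (fun g acc => mulN n (facN n g.1) acc) [1]

def splitC (n : ℕ) (gs : List (List ℕ × List ℕ)) (e h1 c1 h2 c2 : List ℕ) : Bool :=
  isC 0 (axpy n (n - 1) (axpy n 1 (mulN n c1 h1) (mulN n c2 h2)) (mulN n e (prodG n gs)))

def cycC (n N M : ℕ) (gs : List (List ℕ × List ℕ)) : Bool :=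
  gs.all fun g => isC 0 (axpy n (n - 1) [0, 1] (frobM n g.1 N)) &&
    isC 1 (mulM n g.1 g.2 (axpy n (n - 1) [0, 1] (frobM n g.1 M)))

variable {κ : Type} [Field κ] (n : ℕ) [CharP κ n]

theorem cast_pred (hn : n ≠ 0) : ((n - 1 : ℕ) : κ) = -1 := by
  rw [Nat.cast_sub (Nat.pos_of_ne_zero hn)]; simp

theorem nev_facN (hn : n ≠ 0) (g : List ℕ) (y : κ) :
    nev (facN n g) y = y ^ g.length - nev g y := by
  have : nev (g.map (fun a => n - a % n)) y = - nev g y := by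
    induction g with
    | nil => simp
    | cons a l ih =>
      rw [List.map_cons, nev_cons, nev_cons, ih,
        Nat.cast_sub (Nat.mod_lt _ (Nat.pos_of_ne_zero hn)).le, cast_mod]
      simp; ring
  rw [facN, nev_append, this]; simp; ring

theorem exists_fac (hn : n ≠ 0) (gs : List (List ℕ × List ℕ)) (e h1 c1 h2 c2 : List ℕ)
    (h : splitC n gs e h1 c1 h2 c2 = true) (y : κ) (y1 : nev h1 y = 0) (y2 : nev h2 y = 0)
    (ye : nev e y ≠ 0) : ∃ g ∈ gs, y ^ g.1.length = nev g.1 y := by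
  have h1 := nev_of_isC 0 _ h y
  rw [nev_axpy, nev_axpy, nev_mulN, nev_mulN, nev_mulN, y1, y2] at h1
  have h2 : nev (prodG n gs) y = 0 := by simpa [ye] using h1
  clear h h1
  induction gs with
  | nil => simp [prodG] at h2
  | cons g gs ih =>
    have h3 : nev (prodG n (g :: gs)) y = nev (facN n g.1) y * nev (prodG n gs) y := by
      rw [← nev_mulN n]; rfl
    rw [h3, mul_eq_zero, nev_facN n hn] at h2
    rcases h2 with h2 | h2
    · exact ⟨g, by simp, sub_eq_zero.1 h2⟩
    · obtain ⟨g', hg', h'⟩ := ih h2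
      exact ⟨g', by simp [hg'], h'⟩

theorem cyc_of_cycC (hn : n ≠ 0) (N M : ℕ) (gs : List (List ℕ × List ℕ))
    (hc : cycC n N M gs = true) (y : κ) (hy : ∃ g ∈ gs, y ^ g.1.length = nev g.1 y) :
    y ^ n ^ N = y ∧ y ^ n ^ M ≠ y := by
  obtain ⟨g, hg, hy⟩ := hy
  have := List.all_eq_true.1 hc g hg
  rw [Bool.and_eq_true] at this
  have h1 := nev_of_isC 0 _ this.1 y
  have h2 := nev_of_isC 1 _ this.2 y
  rw [nev_axpy, nev_frobM n g.1 y hy, cast_pred n hn] at h1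
  rw [nev_mulM n _ _ _ y hy, nev_axpy, nev_frobM n g.1 y hy, cast_pred n hn] at h2
  simp only [nev_cons, nev_nil] at h1 h2
  push_cast at h1 h2
  refine ⟨by linear_combination h1, fun h => ?_⟩
  rw [h] at h2
  have : (0 : κ) = 1 := by linear_combination h2
  exact zero_ne_one this

end certs

section placeuse
variable {K L κ : Type} [Field K] [Field L] [Algebra K L] [Field κ] {s : L} {ℓ s0 : ℕ}
    {φ : L → κ} {σ : L ≃ₐ[K] L}

theorem pow_root (hs : ∀ g : L ≃ₐ[K] L, g s = s) (g : L ≃ₐ[K] L) (y : L) (hy : fev s y = 0) :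
    fev s (g y) = 0 := by
  have := map_fev (g : L →+* L) s y
  rw [hy] at this
  simp only [map_zero] at this
  have h : (g : L →+* L) s = s := hs g
  rw [h] at this
  exact this.symm


theorem frob_pow (h : IsPl s ℓ s0 φ σ) (hs : ∀ g : L ≃ₐ[K] L, g s = s) (k : ℕ) (y : L)
    (hy : fev s y = 0) : φ ((σ ^ k) y) = φ y ^ ℓ ^ k := by
  induction k with
  | zero => simp
  | succ k ih =>
    rw [pow_succ', AlgEquiv.mul_apply, h.frob _ (pow_root hs _ _ hy), ih, ← pow_mul, pow_succ]

theorem pow_eq_iff (h : IsPl s ℓ s0 φ σ) (hs : ∀ g : L ≃ₐ[K] L, g s = s) (k : ℕ) (y : L)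
    (hy : fev s y = 0) : (σ ^ k) • y = y ↔ φ y ^ ℓ ^ k = φ y := by
  rw [← frob_pow h hs k y hy]
  exact ⟨fun e => congrArg φ e, fun e => h.inj _ _ (pow_root hs _ _ hy) hy e⟩

theorem rat_root (h : IsPl s ℓ s0 φ σ) (hl : ℓ.Prime) (hs : ∀ g : L ≃ₐ[K] L, g s = s) (b : ℕ)
    (hb : (evN ℓ (fN ℓ s0) b).beq 0 = true) :
    ∃ β, fev s β = 0 ∧ φ β = (b : κ) ∧ σ • β = β := by
  have := h.char
  have : Fact ℓ.Prime := ⟨hl⟩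
  have h0 : fev (s0 : κ) (b : κ) = 0 := by
    rw [← nev_fN ℓ hl.ne_zero, ← cast_evN, Nat.eq_of_beq_eq_true hb]; simp
  obtain ⟨β, hβ, e⟩ := h.surj _ h0
  refine ⟨β, hβ, e, ?_⟩
  have := (pow_eq_iff h hs 1 β hβ).2 (by
    rw [e, pow_one, ← Nat.cast_pow, ]
    have := map_natCast (frobenius κ ℓ) b
    rw [frobenius_def] at this
    exact_mod_cast this)
  simpa using this

theorem adj_iff (h : IsPl s ℓ s0 φ σ) (hl : ℓ.Prime) {β y : L} {b : ℕ} (hβ : fev s β = 0)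
    (e : φ β = (b : κ)) (hy : fev s y = 0) : ev2 AL β y = 0 ↔ nev (AN ℓ b) (φ y) = 0 := by
  have := h.char
  rw [h.adj _ _ hβ hy, e, nev_AN ℓ hl.ne_zero]

theorem adj_iff' (h : IsPl s ℓ s0 φ σ) (hl : ℓ.Prime) {β y : L} {b c : ℕ} (hβ : fev s β = 0)
    (e : φ β = (b : κ)) (hy : fev s y = 0) (ey : φ y = (c : κ)) :
    ev2 AL β y = 0 ↔ (evN ℓ (AN ℓ b) c % ℓ).beq 0 = true := by
  have := h.char
  rw [adj_iff h hl hβ e hy, ey, ← cast_evN, CharP.cast_eq_zero_iff κ ℓ, Nat.dvd_iff_mod_eq_zero]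
  exact ⟨fun e => by rw [e]; rfl, fun e => Nat.eq_of_beq_eq_true e⟩

theorem ne_cast (h : IsPl s ℓ s0 φ σ) {y z : L} {b c : ℕ}
    (ey : φ y = (b : κ)) (ez : φ z = (c : κ)) (hbc : (b % ℓ).beq (c % ℓ) = false) : y ≠ z := by
  have := h.char
  rintro rfl
  rw [ey] at ez
  have := (CharP.cast_eq_iff_mod_eq κ ℓ).1 ez
  exact Nat.ne_of_beq_eq_false hbc this

theorem lin_ne (h : IsPl s ℓ s0 φ σ) {β y : L} {b : ℕ} (hb : b < ℓ) (hβ : fev s β = 0)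
    (e : φ β = (b : κ)) (hy : fev s y = 0) (hne : y ≠ β) : nev [ℓ - b, 1] (φ y) ≠ 0 := by
  have := h.char
  intro h0
  apply hne
  apply h.inj _ _ hy hβ
  rw [e]
  simp only [nev_cons, nev_nil] at h0
  rw [Nat.cast_sub hb.le] at h0
  simp at h0
  linear_combination h0

theorem fixed_cast (h : IsPl s ℓ s0 φ σ) (hl : ℓ.Prime) (hs : ∀ g : L ≃ₐ[K] L, g s = s) (y : L)
    (hy : fev s y = 0) (hfix : σ • y = y) : ∃ b < ℓ, φ y = (b : κ) ∧ (evN ℓ (fN ℓ s0) b % ℓ).beq 0 = true := by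
  have := h.char
  have : Fact ℓ.Prime := ⟨hl⟩
  have e : φ y ^ ℓ = φ y := by
    have := (pow_eq_iff h hs 1 y hy).1 (by simpa using hfix)
    simpa using this
  have hb : ∃ b < ℓ, φ y = (b : κ) := by
    classical
    have hroot : (X ^ ℓ - X : κ[X]).IsRoot (φ y) := by simp [e]
    let S : Finset κ := (Finset.range ℓ).image (fun b : ℕ => (b : κ))
    have hS : S.card = ℓ := by
      rw [Finset.card_image_of_injOn, Finset.card_range]
      intro a ha b hb hab
      have := (CharP.cast_eq_iff_mod_eq κ ℓ).1 hab
      simp only [Finset.coe_range, Set.mem_Iio] at ha hb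
      rwa [Nat.mod_eq_of_lt ha, Nat.mod_eq_of_lt hb] at this
    by_contra hcon
    have hnot : φ y ∉ S := by
      intro hm
      obtain ⟨b, hb, hb'⟩ := Finset.mem_image.1 hm
      exact hcon ⟨b, Finset.mem_range.1 hb, hb'.symm⟩
    have hne : (X ^ ℓ - X : κ[X]) ≠ 0 := FiniteField.X_pow_card_sub_X_ne_zero κ hl.one_lt
    have hsub : (insert (φ y) S).val ⊆ (X ^ ℓ - X : κ[X]).roots := by
      intro z hz
      rw [mem_roots hne]
      rcases Finset.mem_insert.1 (Finset.mem_def.2 hz) with rfl | hz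
      · exact hroot
      · obtain ⟨b, hb, rfl⟩ := Finset.mem_image.1 hz
        have := map_natCast (frobenius κ ℓ) b
        rw [frobenius_def] at this
        simp [this]
    have h1 := Multiset.card_le_card ((Multiset.le_iff_subset (Finset.nodup _)).2 hsub)
    have h2 := card_roots' (X ^ ℓ - X : κ[X])
    rw [FiniteField.X_pow_card_sub_X_natDegree_eq κ hl.one_lt] at h2
    have h3 : (insert (φ y) S).card = ℓ + 1 := by rw [Finset.card_insert_of_notMem hnot, hS]
    have h4 : (insert (φ y) S).val.card = (insert (φ y) S).card := rfl
    omega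
  obtain ⟨b, hb, e'⟩ := hb
  refine ⟨b, hb, e', ?_⟩
  have h0 := h.root y hy
  rw [e', ← nev_fN ℓ hl.ne_zero, ← cast_evN, CharP.cast_eq_zero_iff κ ℓ,
    Nat.dvd_iff_mod_eq_zero] at h0
  rw [h0]; rfl

theorem place_cyc (h : IsPl s ℓ s0 φ σ) (hl : ℓ.Prime) (hs : ∀ g : L ≃ₐ[K] L, g s = s)
    (N M : ℕ) (gs : List (List ℕ × List ℕ)) (e h1 c1 h2 c2 : List ℕ)
    (hsp : splitC ℓ gs e h1 c1 h2 c2 = true) (hc : cycC ℓ N M gs = true) (y : L)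
    (hy : fev s y = 0) (y1 : nev h1 (φ y) = 0) (y2 : nev h2 (φ y) = 0) (ye : nev e (φ y) ≠ 0) :
    σ ^ N • y = y ∧ σ ^ M • y ≠ y := by
  have := h.char
  have := cyc_of_cycC ℓ hl.ne_zero N M gs hc (φ y)
    (exists_fac ℓ hl.ne_zero gs e h1 c1 h2 c2 hsp _ y1 y2 ye)
  rwa [Ne, pow_eq_iff h hs _ _ hy, pow_eq_iff h hs _ _ hy]

theorem root_nev (h : IsPl s ℓ s0 φ σ) (hl : ℓ.Prime) (y : L) (hy : fev s y = 0) :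
    nev (fN ℓ s0) (φ y) = 0 := by
  have := h.char
  rw [nev_fN ℓ hl.ne_zero, h.root y hy]

end placeuse
theorem sep_13_1 : ∃ u v, sepC 13 1 u v = true :=
  ⟨[1, 1, 10, 4, 10, 7, 9, 9, 3, 11, 8, 9, 10, 8, 10, 0, 1, 3, 7, 6, 5, 0, 8, 5, 6, 1, 7, 2, 5, 3, 1, 1, 12, 5, 3, 10, 8, 1, 2, 7, 1, 7, 1, 5, 12, 12, 1, 5, 8, 12, 10, 3, 12, 0, 5, 0, 10, 9, 9, 8, 2, 5, 9, 12, 5, 11, 0, 0, 3, 2, 9, 9, 10, 7, 7, 6],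
  [5, 3, 4, 11, 4, 5, 0, 4, 5, 12, 4, 4, 10, 6, 5, 11, 3, 6, 7, 4, 11, 5, 10, 8, 7, 4, 7, 8, 6, 2, 0, 8, 4, 7, 1, 1, 12, 8, 2, 8, 7, 12, 0, 2, 12, 9, 1, 7, 12, 3, 1, 8, 11, 1, 1, 4, 9, 0, 2, 1, 11, 3, 9, 6, 6, 1, 2, 3, 0, 8, 11, 9, 10, 9, 10, 11, 6], by decide +kernel⟩

theorem sep_13_2 : ∃ u v, sepC 13 2 u v = true :=
  ⟨[4, 2, 4, 6, 7, 11, 12, 5, 8, 1, 2, 1, 0, 1, 6, 3, 1, 1, 9, 10, 3, 6, 5, 10, 3, 11, 12, 11, 7, 3, 8, 3, 0, 8, 6, 8, 12, 11, 9, 6, 1, 9, 12, 2, 5, 0, 8, 3, 12, 12, 2, 1, 8, 10, 12, 5, 4, 0, 2, 11, 6, 6, 1, 9, 8, 2, 7, 3, 12, 2, 9, 2, 5, 8, 12, 11],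
  [0, 8, 2, 10, 10, 7, 1, 9, 7, 2, 3, 8, 8, 3, 1, 11, 5, 9, 2, 6, 3, 2, 9, 5, 5, 5, 2, 4, 10, 0, 2, 11, 1, 5, 7, 0, 3, 7, 7, 9, 6, 5, 2, 6, 10, 0, 2, 1, 9, 7, 11, 3, 3, 9, 12, 10, 2, 3, 6, 2, 11, 1, 4, 11, 2, 4, 9, 7, 0, 3, 3, 3, 4, 6, 8, 10, 11], by decide +kernel⟩

theorem sep_13_3 : ∃ u v, sepC 13 3 u v = true :=
  ⟨[1, 8, 12, 8, 1, 7, 8, 3, 0, 1, 0, 3, 4, 9, 10, 0, 1, 1, 10, 3, 8, 8, 1, 7, 12, 10, 6, 7, 10, 12, 10, 1, 0, 4, 2, 0, 2, 4, 12, 4, 11, 2, 7, 9, 3, 1, 2, 1, 5, 7, 1, 8, 6, 2, 8, 6, 2, 5, 9, 7, 10, 12, 9, 12, 8, 5, 4, 5, 1, 11, 6, 10, 9, 7],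
  [4, 0, 0, 11, 2, 10, 4, 10, 10, 10, 7, 3, 10, 9, 9, 2, 0, 4, 3, 9, 6, 5, 6, 5, 5, 8, 7, 4, 5, 7, 10, 5, 5, 4, 3, 3, 10, 8, 9, 5, 9, 3, 1, 6, 2, 4, 10, 6, 9, 9, 5, 0, 10, 11, 1, 7, 7, 6, 9, 1, 4, 10, 7, 12, 5, 9, 8, 10, 7, 4, 1, 4, 2, 1, 7], by decide +kernel⟩

theorem sep_13_11 : ∃ u v, sepC 13 11 u v = true :=
  ⟨[6, 1, 2, 7, 9, 5, 0, 5, 4, 6, 3, 7, 9, 6, 12, 5, 1, 2, 9, 1, 9, 5, 9, 11, 7, 5, 10, 9, 9, 12, 0, 0, 6, 9, 7, 1, 0, 12, 2, 11, 11, 1, 8, 4, 0, 7, 5, 2, 3, 7, 5, 9, 8, 10, 11, 10, 5, 3, 6, 12, 8, 5, 0, 7, 0, 3, 7, 10, 3, 11, 6, 7, 5, 0, 4, 4],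
  [0, 4, 1, 5, 12, 9, 10, 1, 9, 2, 1, 1, 11, 4, 11, 2, 12, 9, 12, 8, 10, 0, 0, 0, 6, 1, 3, 6, 3, 8, 9, 10, 0, 5, 0, 10, 8, 2, 0, 11, 3, 0, 0, 4, 3, 2, 3, 9, 4, 7, 0, 9, 1, 7, 2, 4, 4, 11, 7, 7, 4, 11, 3, 3, 7, 1, 11, 8, 7, 0, 5, 7, 5, 9, 8, 7, 4], by decide +kernel⟩

theorem sep_19_4 : ∃ u v, sepC 19 4 u v = true :=
  ⟨[16, 11, 13, 17, 0, 14, 16, 2, 6, 15, 3, 17, 10, 6, 12, 9, 5, 1, 16, 11, 17, 4, 5, 2, 16, 12, 9, 3, 1, 9, 17, 1, 2, 7, 13, 8, 16, 0, 17, 5, 5, 14, 16, 17, 11, 16, 1, 13, 18, 6, 1, 3, 12, 10, 8, 12, 13, 17, 12, 15, 1, 13, 3, 4, 14, 3, 15, 8, 17, 4, 16, 6, 1, 5, 11, 6],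
  [12, 18, 2, 11, 6, 6, 8, 3, 16, 12, 15, 6, 2, 18, 3, 10, 10, 7, 5, 0, 3, 12, 10, 5, 13, 12, 14, 1, 5, 18, 15, 5, 16, 18, 2, 3, 17, 0, 10, 1, 6, 10, 9, 1, 7, 2, 12, 18, 11, 13, 5, 5, 11, 16, 9, 8, 5, 13, 1, 12, 2, 10, 13, 10, 16, 3, 9, 5, 13, 6, 3, 17, 10, 17, 1, 16, 13], by decide +kernel⟩

theorem sep_23_1 : ∃ u v, sepC 23 1 u v = true :=
  ⟨[15, 19, 7, 10, 9, 2, 0, 0, 15, 10, 0, 22, 5, 1, 14, 10, 13, 13, 11, 10, 4, 11, 10, 7, 11, 20, 19, 9, 9, 2, 0, 12, 14, 20, 22, 10, 3, 11, 20, 7, 7, 14, 10, 7, 7, 4, 22, 2, 11, 18, 11, 13, 12, 21, 9, 2, 19, 14, 6, 11, 3, 2, 20, 4, 11, 21, 0, 16, 17, 20, 19, 9, 16, 16, 0, 16],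
  [4, 15, 0, 4, 8, 4, 20, 10, 15, 6, 18, 22, 17, 12, 18, 10, 13, 2, 0, 10, 9, 21, 2, 20, 13, 14, 12, 5, 17, 16, 17, 9, 6, 9, 4, 17, 22, 12, 9, 6, 12, 2, 4, 3, 3, 5, 7, 15, 22, 22, 21, 2, 2, 14, 1, 1, 19, 3, 2, 13, 17, 5, 5, 0, 0, 9, 4, 10, 1, 9, 4, 17, 22, 17, 0, 6, 21], by decide +kernel⟩

theorem sep_103_30 : ∃ u v, sepC 103 30 u v = true :=
  ⟨[86, 61, 83, 43, 90, 23, 77, 70, 27, 22, 23, 33, 58, 7, 55, 12, 94, 61, 18, 31, 18, 94, 99, 45, 44, 102, 31, 31, 42, 27, 5, 43, 57, 81, 77, 101, 4, 98, 97, 51, 19, 58, 74, 61, 43, 93, 38, 77, 30, 8, 101, 81, 36, 32, 25, 59, 10, 99, 60, 20, 41, 2, 46, 17, 27, 9, 72, 58, 14, 42, 70, 24, 24, 31, 34, 16],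
  [88, 91, 61, 84, 62, 72, 11, 28, 64, 75, 59, 70, 29, 101, 32, 26, 16, 102, 41, 22, 47, 56, 28, 52, 23, 1, 16, 50, 13, 85, 53, 76, 90, 7, 60, 69, 20, 34, 34, 101, 28, 83, 61, 25, 49, 67, 88, 77, 31, 94, 78, 25, 74, 44, 57, 67, 15, 68, 88, 48, 76, 40, 45, 70, 69, 8, 54, 60, 27, 38, 70, 66, 39, 66, 53, 52, 64], by decide +kernel⟩

theorem sep_379_180 : ∃ u v, sepC 379 180 u v = true :=
  ⟨[48, 316, 366, 74, 154, 188, 268, 318, 342, 283, 269, 58, 45, 87, 338, 113, 10, 236, 275, 167, 63, 304, 285, 26, 193, 96, 55, 94, 29, 365, 307, 238, 62, 372, 40, 78, 71, 100, 229, 351, 345, 125, 209, 50, 143, 66, 14, 239, 162, 286, 246, 240, 324, 228, 375, 316, 314, 63, 77, 7, 30, 3, 230, 234, 159, 350, 93, 54, 215, 159, 129, 52, 137, 80, 218, 123],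
  [11, 4, 125, 306, 88, 354, 270, 253, 205, 150, 283, 167, 213, 272, 198, 258, 222, 339, 70, 175, 194, 130, 324, 208, 299, 374, 34, 200, 114, 376, 295, 305, 143, 8, 59, 51, 341, 314, 111, 353, 153, 294, 238, 15, 204, 98, 89, 256, 119, 184, 225, 117, 147, 130, 375, 295, 57, 107, 189, 272, 331, 188, 220, 366, 171, 336, 143, 207, 371, 39, 329, 350, 306, 49, 122, 373, 87], by decide +kernel⟩

theorem sep_5273_3090 : ∃ u v, sepC 5273 3090 u v = true :=
  ⟨[4704, 4085, 965, 2181, 3427, 3465, 2004, 995, 3995, 4733, 1562, 920, 482, 2067, 4874, 1357, 218, 3059, 4068, 31, 1379, 4061, 3567, 2644, 1573, 4300, 2335, 4630, 1029, 5216, 4805, 1819, 1550, 2604, 1604, 4379, 1829, 394, 3505, 811, 2373, 2588, 4947, 594, 23, 3702, 5170, 3844, 755, 4291, 4249, 313, 3475, 3216, 2386, 786, 4138, 5157, 2844, 2659, 3606, 373, 4181, 777, 3017, 4687, 4058, 4342, 3314, 494, 4805, 2484, 2386, 3291, 1765, 1086],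
  [1342, 1754, 343, 1649, 1814, 3188, 5064, 1813, 783, 5249, 1711, 265, 3673, 156, 3940, 1477, 1666, 3306, 3964, 4921, 2113, 483, 4484, 3257, 1761, 2870, 1004, 4569, 2200, 2198, 2226, 456, 4860, 4285, 1674, 2734, 1672, 2304, 2570, 4728, 3269, 1504, 4553, 1167, 3504, 2535, 1554, 1834, 1201, 4008, 1969, 2209, 469, 1283, 1117, 618, 1532, 4536, 4210, 1266, 1344, 3206, 2234, 2421, 705, 5018, 3582, 4271, 3617, 2269, 3453, 5140, 848, 588, 99, 3682, 3136], by decide +kernel⟩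

theorem cy0_7 : ∃ gs c, splitC 13 gs [1] (fN 13 2) c [] [] = true ∧ cycC 13 7 1 gs = true :=
  ⟨[([7, 4, 5, 2, 5, 2, 12], [12, 11, 9, 5, 5, 9, 1]),
  ([5, 0, 8, 2, 3, 11, 10], [9, 11, 3, 1, 6, 0, 2]),
  ([3, 3, 6, 8, 11, 8, 0], [7, 6, 0, 7, 10, 4, 11]),
  ([10, 6, 10, 5, 4, 0, 10], [9, 2, 12, 8, 3, 0, 2]),
  ([9, 4, 1, 0, 5, 8, 1], [7, 4, 7, 0, 3, 10, 6]),
  ([7, 1, 5, 1, 2, 12, 8], [0, 11, 9, 6, 11, 11, 4]),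
  ([9, 7, 2, 5, 7, 10, 4], [4, 12, 2, 8, 11, 0, 8]),
  ([2, 3, 8, 8, 7, 7, 11], [10, 12, 3, 12, 10, 2, 7]),
  ([2, 4, 3, 12, 12, 2, 6], [2, 2, 6, 1, 7, 8, 6]),
  ([12, 3, 3, 10, 12, 12, 6], [12, 7, 6, 2, 3, 12, 11]),
  ([11, 3, 9, 11, 4, 3, 11], [5, 10, 10, 0, 11, 0, 12])],
  [1], by decide +kernel, by decide +kernel⟩

theorem cy0_11 : ∃ gs c, splitC 13 gs [1] (fN 13 11) c [] [] = true ∧ cycC 13 11 1 gs = true :=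
  ⟨[([12, 0, 6, 1, 2, 12, 10, 6, 7, 12, 10], [5, 6, 4, 5, 12, 12, 4, 12, 10, 11, 12]),
  ([9, 1, 2, 10, 9, 12, 11, 12, 1, 8, 8], [1, 6, 10, 5, 7, 8, 9, 5, 10, 0, 7]),
  ([3, 10, 7, 5, 7, 8, 2, 12, 2, 3, 12], [11, 6, 9, 4, 2, 7, 1, 3, 4, 12, 12]),
  ([1, 7, 5, 10, 9, 3, 5, 7, 10, 4, 10], [6, 10, 6, 6, 6, 5, 9, 0, 11, 9, 12]),
  ([2, 1, 12, 2, 9, 3, 5, 8, 3, 5, 4], [12, 0, 9, 7, 9, 10, 12, 5, 6, 12, 10]),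
  ([4, 1, 0, 9, 11, 12, 3, 1, 0, 9, 9], [12, 12, 1, 4, 2, 11, 0, 0, 3, 12, 11]),
  ([3, 1, 4, 2, 5, 5, 4, 5, 9, 5, 3], [4, 0, 2, 9, 2, 3, 10, 4, 5, 8, 3])],
  [1], by decide +kernel, by decide +kernel⟩

theorem cy1_8 : ∃ gs c, splitC 13 gs [1] (AN 13 12) c [] [] = true ∧ cycC 13 8 4 gs = true :=
  ⟨[([4, 2, 0, 11, 11, 5, 4, 2], [9, 2, 10, 5, 7, 10, 1, 3]),
  ([8, 5, 2, 5, 1, 7, 12, 12], [8, 8, 4, 4, 7, 12, 8, 2])],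
  [3], by decide +kernel, by decide +kernel⟩

theorem cy1_5 : ∃ gs c, splitC 13 gs [6, 1] (AN 13 0) c [] [] = true ∧ cycC 13 5 1 gs = true :=
  ⟨[([4, 11, 1, 6, 6], [11, 10, 12, 1, 10]),
  ([9, 12, 3, 11, 4], [2, 2, 2, 3, 6]),
  ([11, 5, 1, 4, 12], [2, 1, 9, 6, 3])],
  [9], by decide +kernel, by decide +kernel⟩

theorem cy2_3 : ∃ gs c, splitC 19 gs [7, 1] (AN 19 0) c [] [] = true ∧ cycC 19 3 1 gs = true :=
  ⟨[([7, 12, 11], [1, 2, 14]),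
  ([1, 0, 15], [6, 12, 8]),
  ([9, 14, 15], [6, 0, 18]),
  ([7, 13, 2], [8, 16, 1]),
  ([13, 8, 14], [1, 0, 3])],
  [6], by decide +kernel, by decide +kernel⟩

theorem cy3_3 : ∃ gs c, splitC 19 gs (AN 19 2) (AN 19 0) c [] [] = true ∧ cycC 19 3 1 gs = true :=
  ⟨[([13, 8, 14], [1, 0, 3]),
  ([1, 0, 15], [6, 12, 8]),
  ([7, 13, 2], [8, 16, 1]),
  ([7, 12, 11], [1, 2, 14])],
  [5, 6, 15, 6, 17, 6, 13, 17, 12, 16, 3, 6, 4], by decide +kernel, by decide +kernel⟩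

theorem cy3_4 : ∃ gs c, splitC 23 gs (AN 23 21) (AN 23 16) c [] [] = true ∧ cycC 23 4 2 gs = true :=
  ⟨[([9, 3, 0, 6], [12, 11, 6, 20]),
  ([3, 1, 12, 22], [14, 7, 19, 10]),
  ([15, 2, 12, 12], [18, 13, 12, 14])],
  [15, 10, 22, 0, 15, 20, 11, 16, 2, 8, 1, 14, 16], by decide +kernel, by decide +kernel⟩

theorem cy4_a : ∃ gs c d, splitC 103 gs [1] (AN 103 67) c (AN 103 20) d = true ∧ cycC 103 2 1 gs = true :=
  ⟨[([48, 83], [80, 8]),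
  ([98, 78], [97, 16])],
  [85, 10, 83, 76, 51, 102, 9, 1, 60, 92, 51, 33], [90, 13, 61, 40, 77, 30, 28, 31, 76, 6, 3, 62], by decide +kernel, by decide +kernel⟩

theorem cy4_b : ∃ gs c d, splitC 379 gs [1] (AN 379 158) c (AN 379 89) d = true ∧ cycC 379 2 1 gs = true :=
  ⟨[([283, 193], [288, 52]),
  ([344, 7], [204, 50])],
  [233, 1, 351, 33, 215, 132, 289, 113, 3, 30, 84, 140], [238, 29, 77, 2, 136, 306, 8, 126, 5, 172, 96, 251], by decide +kernel, by decide +kernel⟩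
def rtL : List ℕ := [31, 237, 242, 293, 313, 314, 422, 472, 549, 624, 744, 759, 884, 1061, 1101, 1196, 1216, 1325, 1412, 1451, 1456, 1569, 1644, 1676, 1690, 1702, 1783, 1785, 1789, 1802, 1924, 1941, 1985, 1989, 2043, 2166, 2212, 2281, 2404, 2425, 2517, 2628, 2745, 2815, 3008, 3090, 3165, 3235, 3240, 3278, 3307, 3324, 3380, 3692, 3812, 3818, 3825, 3903, 3923, 3931, 3979, 4181, 4344, 4364, 4380, 4413, 4420, 4530, 4612, 4774, 4816, 4969, 5180, 5194, 5196, 5236, 5271]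

def maskL : List ℕ := [76830693588224383717892, 43719233965296092975648, 57601130572974001490049, 32584232354777132957840, 38074097800198245968392, 79040840435760834379778, 922697812869292044800, 80427948559738981089804, 90057007523502660028416, 6352890224377201875, 19030122784402092098048, 79407763303480561940, 30845265314253541247043, 75790755146386832621648, 24941450822968707907600, 1180663792936149063088, 33056745736003766976625, 26425069042358506490368, 16528611455157320851972, 60819059678434440520448, 18945530121799067762736, 19259049613137501487106, 1918561027035909917696, 38371831177418909057025, 156816480357312430856, 85592898131980810585106, 10076696647782545678337, 618011741070102106256, 3598270868011175979136, 2454174130667593449540, 10699130292182648488128, 3100675462433924449553, 39271425585569351713, 1153241188289093899, 40156256084621358285249, 370412255666138255488, 80332116180642285752336, 20297345236332244631872, 154790992992470138884, 40436131087414716335232, 28633960832581433827458, 114226995193586926244864, 121602094360372207160384, 19499410965171716270082, 7130315959801317687313, 61405207321360025550912, 112721724289212710912, 2366447949434794894598, 9444792656035140095200, 56670997514914912797472, 5907651769744405573636, 673436765004007232256, 442869328735346360329, 87769753588053519122944, 77939802193398576709654, 114561200768872018804736, 113356542905671573733448, 11614785778203822210, 75585534476204734957642, 86923364182761707407872, 9447110950156949799460,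 5019442491935827178504, 18484078489314003496, 10625759236683351598116, 14614811303562125509633, 147619076620231378254, 42501309675368030940201, 37834853059944706633888, 1201357722481869324660, 4722945206419274072172, 304984897202269241355, 27184895374528552, 684836556879698542978, 37808340651099554124040, 75557864334081696420876, 9666202586313201811478, 18890465737261679911329]

def wL0 : List ℕ := [1, 0, 2, 0, 5, 0, 0, 0, 0, 3, 0, 4, 0, 0, 0, 0, 0, 0, 0, 0, 0, 0, 0, 0, 0, 0, 0, 0, 0, 0, 0, 0, 0, 0, 0, 0, 0, 0, 0, 0, 0, 0, 0, 0, 0, 0, 0, 0, 0, 0, 0, 0, 0, 0, 0, 0, 0, 0, 0, 0, 0, 0, 0, 0, 0, 0, 0, 0, 0, 0, 0, 0, 0, 0, 0, 0, 0]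

def wL1 : List ℕ := [14, 9, 19, 25, 30, 0, 9, 13, 16, 29, 9, 33, 17, 25, 25, 25, 26, 25, 13, 9, 25, 0, 16, 1, 9, 25, 1, 25, 16, 4, 0, 26, 17, 1, 1, 0, 25, 0, 4, 0, 0, 0, 16, 16, 26, 0, 0, 4, 16, 9, 4, 9, 1, 9, 29, 0, 0, 16, 16, 25, 13, 0, 25, 4, 1, 4, 17, 0, 29, 4, 1, 0, 0, 0, 4, 29, 1]

def wL2 : List ℕ := [254, 383, 597, 77, 689, 725, 233, 768, 514, 290, 33, 673, 360, 562, 562, 634, 554, 364, 27, 183, 45, 693, 586, 635, 233, 5, 150, 594, 458, 415, 725, 626, 432, 507, 707, 509, 77, 765, 483, 120, 743, 120, 536, 386, 69, 336, 208, 721, 586, 201, 465, 215, 419, 183, 502, 226, 693, 436, 386, 214, 45, 102, 164, 433, 62, 177, 560, 208, 17, 433, 635, 743, 615, 765, 465, 534, 707]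

def wL3 : List ℕ := [317, 173, 159, 618, 532, 493, 253, 750, 647, 273, 494, 771, 531, 615, 237, 601, 262, 688, 197, 411, 489, 282, 222, 407, 147, 68, 98, 598, 630, 307, 493, 641, 467, 312, 591, 92, 240, 164, 623, 127, 755, 127, 2, 621, 640, 39, 462, 19, 680, 450, 151, 732, 630, 517, 420, 612, 282, 454, 163, 266, 368, 589, 772, 314, 627, 651, 283, 462, 767, 754, 714, 755, 230, 164, 484, 453, 125]

def wL4 : List ℕ := [391, 208, 254, 79, 635, 527, 599, 486, 49, 63, 643, 56, 224, 653, 719, 263, 686, 402, 554, 716, 448, 44, 453, 129, 261, 488, 564, 434, 521, 715, 315, 107, 454, 163, 514, 480, 757, 563, 358, 425, 311, 84, 52, 95, 165, 473, 319, 13, 118, 65, 401, 158, 150, 663, 710, 522, 584, 523, 677, 91, 274, 416, 726, 119, 90, 544, 637, 167, 29, 23, 600, 230, 443, 110, 526, 328, 630]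

def wmod : ℕ := 773

def adjc (i j : ℕ) : Bool := (maskL.getD i 0).testBit j

def all77 (f : ℕ → Bool) : Bool := (List.range 77).all f

theorem all77_iff {f : ℕ → Bool} (h : all77 f = true) (i : ℕ) (hi : i < 77) : f i = true :=
  List.all_eq_true.1 h i (List.mem_range.2 hi)

theorem chk_rt : splitC 5273 (rtL.map fun b => ([b], [])) [1] (fN 5273 3090) [1] [] [] = true := by
  decide +kernel

theorem chk_root : all77 (fun i => (evN 5273 (fN 5273 3090) (rtL.getD i 0)).beq 0) = true := by
  decide +kernel

theorem chk_len : rtL.length = 77 := rfl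

theorem chk_inj : all77 (fun i => all77 fun j =>
    i.beq j || !((rtL.getD i 0 % 5273).beq (rtL.getD j 0 % 5273))) = true := by
  decide +kernel

theorem chk_adj : all77 (fun i => all77 fun j =>
    (evN 5273 (AN 5273 (rtL.getD i 0)) (rtL.getD j 0) % 5273).beq 0 == adjc i j) = true := by
  decide +kernel

def wst (W : List ℕ) : List ℕ := (List.range 77).map fun i =>
  (W.getD i 0 + ((List.range 77).map fun j => bif adjc i j then W.getD j 0 ^ 2 else 0).sum) % wmod

theorem chk_w1 : wst wL0 = wL1 := by decide +kernel
theorem chk_w2 : wst wL1 = wL2 := by decide +kernel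
theorem chk_w3 : wst wL2 = wL3 := by decide +kernel
theorem chk_w4 : wst wL3 = wL4 := by decide +kernel
theorem chk_wi : all77 (fun i => all77 fun j =>
    i.beq j || !((wL4.getD i 0).beq (wL4.getD j 0))) = true := by
  decide +kernel
section base
variable {K L κ : Type} [Field K] [Field L] [Algebra K L] [Field κ] {s : L}
    {φ : L → κ} {σ : L ≃ₐ[K] L}

structure IsBase (s : L) (a : ℕ → L) : Prop where
  root : ∀ i < 77, fev s (a i) = 0
  all : ∀ y, fev s y = 0 → ∃ i < 77, y = a i
  inj : ∀ i < 77, ∀ j < 77, a i = a j → i = j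
  adj : ∀ i < 77, ∀ j < 77, (ev2 AL (a i) (a j) = 0 ↔ adjc i j = true)

theorem base_exists (h : IsPl s 5273 3090 φ σ) (hl : Nat.Prime 5273)
    (hs : ∀ g : L ≃ₐ[K] L, g s = s) : ∃ a, IsBase s a := by
  have := h.char
  have h1 : ∀ i : ℕ, ∃ β, i < 77 → fev s β = 0 ∧ φ β = ((rtL.getD i 0 : ℕ) : κ) := by
    intro i
    by_cases hi : i < 77
    · obtain ⟨β, hβ, e, -⟩ := rat_root h hl hs _ (all77_iff chk_root i hi)
      exact ⟨β, fun _ => ⟨hβ, e⟩⟩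
    · exact ⟨0, fun h => absurd h hi⟩
  choose a ha using h1
  refine ⟨a, fun i hi => (ha i hi).1, ?_, ?_, ?_⟩
  · intro y hy
    obtain ⟨g, hg, e⟩ := exists_fac 5273 hl.ne_zero _ _ _ _ _ _ chk_rt (φ y) (root_nev h hl y hy)
      (by simp) (by simp)
    obtain ⟨b, hb, rfl⟩ := List.mem_map.1 hg
    obtain ⟨i, hi, rfl⟩ := List.mem_iff_getElem.1 hb
    have hi' : i < 77 := by rw [← chk_len]; exact hi
    refine ⟨i, hi', h.inj _ _ hy (ha i hi').1 ?_⟩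
    rw [(ha i hi').2, List.getD_eq_getElem _ _ hi]
    simpa using e
  · intro i hi j hj e
    by_contra hne
    have := all77_iff (all77_iff chk_inj i hi) j hj
    rw [Bool.or_eq_true] at this
    rcases this with h' | h'
    · exact hne (Nat.eq_of_beq_eq_true h')
    · exact ne_cast h (ha i hi).2 (ha j hj).2 (by simpa using h') e
  · intro i hi j hj
    rw [adj_iff' h hl (ha i hi).1 (ha i hi).2 (ha j hj).1 (ha j hj).2]
    have := all77_iff (all77_iff chk_adj i hi) j hj
    rw [eq_of_beq this]

theorem wst_get (W : List ℕ) (i : ℕ) (hi : i < 77) : (wst W).getD i 0 =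
    (W.getD i 0 + ∑ j ∈ Finset.range 77, bif adjc i j then W.getD j 0 ^ 2 else 0) % wmod := by
  have hl : (wst W).length = 77 := by simp [wst]
  rw [List.getD_eq_getElem _ _ (by rw [hl]; exact hi)]
  simp only [wst, List.getElem_map, List.getElem_range]
  rfl

theorem inv_step (π : ℕ → ℕ) (h1 : ∀ i < 77, π i < 77) (h2 : ∀ i < 77, ∀ j < 77, π i = π j → i = j)
    (h3 : ∀ i < 77, ∀ j < 77, adjc (π i) (π j) = adjc i j) (W W' : List ℕ) (hW : wst W = W')
    (h : ∀ i < 77, W.getD (π i) 0 = W.getD i 0) : ∀ i < 77, W'.getD (π i) 0 = W'.getD i 0 := by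
  intro i hi
  have hm : Set.MapsTo π (Finset.range 77) (Finset.range 77) := by
    intro j hj
    exact Finset.mem_coe.2 (Finset.mem_range.2 (h1 j (Finset.mem_range.1 (Finset.mem_coe.1 hj))))
  have hi' : Set.InjOn π (Finset.range 77) := by
    intro j hj k hk e
    exact h2 j (Finset.mem_range.1 (Finset.mem_coe.1 hj)) k
      (Finset.mem_range.1 (Finset.mem_coe.1 hk)) e
  have key : (∑ j ∈ Finset.range 77, bif adjc i j then W.getD j 0 ^ 2 else 0) =
      ∑ j ∈ Finset.range 77, bif adjc (π i) j then W.getD j 0 ^ 2 else 0 := by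
    refine Finset.sum_nbij π (fun j hj => hm hj) hi'
      (Finset.surjOn_of_injOn_of_card_le π hm hi' le_rfl) ?_
    intro j hj
    have hj := Finset.mem_range.1 hj
    rw [h3 i hi j hj, h j hj]
  rw [← hW, wst_get _ _ hi, wst_get _ _ (h1 i hi), h i hi, key]

theorem chk_w0 : all77 (fun i => i.beq 0 || i.beq 2 || i.beq 9 || i.beq 11 || i.beq 4 ||
    (wL0.getD i 0).beq 0) = true := by decide +kernel

theorem stab_triv {a : ℕ → L} (h : IsBase s a) (hs : ∀ g : L ≃ₐ[K] L, g s = s) (g : L ≃ₐ[K] L)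
    (hg : ∀ i ∈ [0, 2, 9, 11, 4], g (a i) = a i) (y : L) (hy : fev s y = 0) : g y = y := by
  have h1 : ∀ i, ∃ j, i < 77 → j < 77 ∧ g (a i) = a j := by
    intro i
    by_cases hi : i < 77
    · obtain ⟨j, hj, e⟩ := h.all _ (pow_root hs g _ (h.root i hi))
      exact ⟨j, fun _ => ⟨hj, e⟩⟩
    · exact ⟨0, fun h => absurd h hi⟩
  choose π hπ using h1
  have p1 : ∀ i < 77, π i < 77 := fun i hi => (hπ i hi).1
  have p2 : ∀ i < 77, ∀ j < 77, π i = π j → i = j := by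
    intro i hi j hj e
    apply h.inj i hi j hj
    apply g.injective
    rw [(hπ i hi).2, (hπ j hj).2, e]
  have p3 : ∀ i < 77, ∀ j < 77, adjc (π i) (π j) = adjc i j := by
    intro i hi j hj
    rw [Bool.eq_iff_iff, ← h.adj i hi j hj, ← h.adj _ (p1 i hi) _ (p1 j hj), ← (hπ i hi).2,
      ← (hπ j hj).2]
    have := map_ev2 (g : L →+* L) AL (a i) (a j)
    have e : ev2 AL (g (a i)) (g (a j)) = g (ev2 AL (a i) (a j)) := this.symm
    rw [e, map_eq_zero_iff g g.injective]
  have hb : ∀ i ∈ [0, 2, 9, 11, 4], π i = i := by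
    intro i hi
    have hi' : i < 77 := by
      simp at hi; omega
    apply h.inj _ (p1 i hi') _ hi'
    rw [← (hπ i hi').2, hg i hi]
  have w0 : ∀ i < 77, wL0.getD (π i) 0 = wL0.getD i 0 := by
    intro i hi
    by_cases hm : i ∈ [0, 2, 9, 11, 4]
    · rw [hb i hm]
    · have hm' : π i ∉ [0, 2, 9, 11, 4] := by
        intro h'
        have := p2 _ (p1 i hi) i hi (hb _ h')
        rw [this] at h'
        exact hm h'
      have z : ∀ k < 77, k ∉ [0, 2, 9, 11, 4] → wL0.getD k 0 = 0 := by
        intro k hk hk'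
        have := all77_iff chk_w0 k hk
        simp only [Bool.or_eq_true, Nat.beq_eq] at this
        simp at hk'
        have h0 : wL0.getD k 0 = 0 ∨ ¬ wL0.getD k 0 = 0 := em _
        omega
      rw [z _ hi hm, z _ (p1 i hi) hm']
  have w4 := inv_step π p1 p2 p3 _ _ chk_w4 (inv_step π p1 p2 p3 _ _ chk_w3
    (inv_step π p1 p2 p3 _ _ chk_w2 (inv_step π p1 p2 p3 _ _ chk_w1 w0)))
  obtain ⟨i, hi, rfl⟩ := h.all y hy
  rw [(hπ i hi).2]
  have := all77_iff (all77_iff chk_wi (π i) (p1 i hi)) i hi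
  rw [Bool.or_eq_true] at this
  rcases this with h' | h'
  · rw [Nat.eq_of_beq_eq_true h']
  · rw [w4 i hi] at h'
    simp at h'

theorem ncard_bound {a : ℕ → L} (h : IsBase s a) (S : Set L) (f : ℕ → Bool) (N : ℕ)
    (hN : ((List.range 77).filter f).length ≤ N)
    (hS : ∀ y ∈ S, fev s y = 0) (hf : ∀ i < 77, a i ∈ S → f i = true) : S.Finite ∧ S.ncard ≤ N := by
  classical
  have hsub : S ⊆ (((List.range 77).filter f).toFinset.image a : Finset L) := by
    intro y hy
    obtain ⟨i, hi, rfl⟩ := h.all y (hS y hy)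
    simp only [Finset.coe_image, Set.mem_image, List.coe_toFinset, Set.mem_ofPred_eq]
    exact ⟨i, by simp [hi, hf i hi hy], rfl⟩
  refine ⟨(Finset.finite_toSet _).subset hsub, ?_⟩
  refine (Set.ncard_le_ncard hsub (Finset.finite_toSet _)).trans ?_
  rw [Set.ncard_coe_finset]
  exact Finset.card_image_le.trans ((List.toFinset_card_le _).trans hN)

end base
section main
variable {K L : Type} [Field K] [Field L] [Algebra K L]

instance iT0 : MulAction (L ≃ₐ[K] L) Unit := PUnit.mulAction
instance iL : MulAction (L ≃ₐ[K] L) L := inferInstance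
instance iT1 : MulAction (L ≃ₐ[K] L) (Unit × L) := @Prod.mulAction _ _ _ _ iT0 iL
instance iT2 : MulAction (L ≃ₐ[K] L) ((Unit × L) × L) := @Prod.mulAction _ _ _ _ iT1 iL
instance iT3 : MulAction (L ≃ₐ[K] L) (((Unit × L) × L) × L) := @Prod.mulAction _ _ _ _ iT2 iL
instance iT4 : MulAction (L ≃ₐ[K] L) ((((Unit × L) × L) × L) × L) := @Prod.mulAction _ _ _ _ iT3 iL
instance iT5 : MulAction (L ≃ₐ[K] L) (((((Unit × L) × L) × L) × L) × L) := @Prod.mulAction _ _ _ _ iT4 iL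
instance jT1 : SMul (L ≃ₐ[K] L) (Unit × L) := iT1.toSMul
instance jT2 : SMul (L ≃ₐ[K] L) ((Unit × L) × L) := iT2.toSMul
instance jT3 : SMul (L ≃ₐ[K] L) (((Unit × L) × L) × L) := iT3.toSMul
instance jT4 : SMul (L ≃ₐ[K] L) ((((Unit × L) × L) × L) × L) := iT4.toSMul
instance jT5 : SMul (L ≃ₐ[K] L) (((((Unit × L) × L) × L) × L) × L) := iT5.toSMul

def Cl0 (s : L) : Unit → Set L := fun _ => {y | fev s y = 0}
def Cl1 (s : L) : Unit × L → Set L := fun t => {y | fev s y = 0 ∧ ev2 AL t.2 y = 0}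
def Cl2 (s : L) : (Unit × L) × L → Set L :=
  fun t => {y | fev s y = 0 ∧ ev2 AL t.1.2 y = 0 ∧ y ≠ t.2}
def Cl3 (s : L) : ((Unit × L) × L) × L → Set L :=
  fun t => {y | fev s y = 0 ∧ ev2 AL t.1.2 y = 0 ∧ ev2 AL t.2 y ≠ 0}
def Cl4 (s : L) : (((Unit × L) × L) × L) × L → Set L :=
  fun t => {y | fev s y = 0 ∧ ev2 AL t.1.2 y = 0 ∧ ev2 AL t.2 y = 0}

theorem smul_adj (g : L ≃ₐ[K] L) (x y : L) : ev2 AL (g • x) (g • y) = 0 ↔ ev2 AL x y = 0 := by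
  have := map_ev2 (g : L →+* L) AL x y
  have e : ev2 AL (g • x) (g • y) = g (ev2 AL x y) := this.symm
  rw [e, map_eq_zero_iff g g.injective]

variable {s : L}

theorem inv0 (hs : ∀ g : L ≃ₐ[K] L, g s = s) (g : L ≃ₐ[K] L) (t : Unit) (y : L)
    (hy : y ∈ Cl0 s t) : g • y ∈ Cl0 s (g • t) := pow_root hs g y hy

theorem inv1 (hs : ∀ g : L ≃ₐ[K] L, g s = s) (g : L ≃ₐ[K] L) (t) (y : L)
    (hy : y ∈ Cl1 s t) : g • y ∈ Cl1 s (g • t) :=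
  ⟨pow_root hs g y hy.1, (smul_adj g _ _).2 hy.2⟩

theorem inv2 (hs : ∀ g : L ≃ₐ[K] L, g s = s) (g : L ≃ₐ[K] L) (t) (y : L)
    (hy : y ∈ Cl2 s t) : g • y ∈ Cl2 s (g • t) :=
  ⟨pow_root hs g y hy.1, (smul_adj g _ _).2 hy.2.1, fun e => hy.2.2 (smul_left_cancel g e)⟩

theorem inv3 (hs : ∀ g : L ≃ₐ[K] L, g s = s) (g : L ≃ₐ[K] L) (t) (y : L)
    (hy : y ∈ Cl3 s t) : g • y ∈ Cl3 s (g • t) :=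
  ⟨pow_root hs g y hy.1, (smul_adj g _ _).2 hy.2.1, fun e => hy.2.2 ((smul_adj g _ _).1 e)⟩

theorem inv4 (hs : ∀ g : L ≃ₐ[K] L, g s = s) (g : L ≃ₐ[K] L) (t) (y : L)
    (hy : y ∈ Cl4 s t) : g • y ∈ Cl4 s (g • t) :=
  ⟨pow_root hs g y hy.1, (smul_adj g _ _).2 hy.2.1, (smul_adj g _ _).2 hy.2.2⟩

open MulAction

/-- all places needed -/
structure Places (K : Type) {L : Type} [Field K] [Field L] [Algebra K L] (s : L) : Prop where
  pl : ∀ ℓ s0 : ℕ, ℓ.Prime → (∃ u v, sepC ℓ s0 u v = true) →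
    ∃ (κ : Type) (_ : Field κ) (φ : L → κ) (σ : L ≃ₐ[K] L), IsPl s ℓ s0 φ σ
  hs : ∀ g : L ≃ₐ[K] L, g s = s

variable {a : ℕ → L}

theorem orb_pos {G Y T : Type*} [Group G] [MulAction G Y] [MulAction G T] (t0 : T) (y0 : Y)
    (h : (orbit (stabilizer G t0) y0).Finite) : 0 < (orbit (stabilizer G t0) y0).ncard :=
  (Set.ncard_pos h).2 ⟨y0, mem_orbit_self y0⟩

theorem lev0 (P : Places K s) (h : IsBase s a) :
    (∀ t y, t ∈ orbit (L ≃ₐ[K] L) () → y ∈ Cl0 s t → (t, y) ∈ orbit (L ≃ₐ[K] L) ((), a 0)) ∧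
    Nat.card (stabilizer (L ≃ₐ[K] L) ()) = 77 * Nat.card (stabilizer (L ≃ₐ[K] L) ((), a 0)) := by
  have hy0 : a 0 ∈ Cl0 s () := h.root 0 (by norm_num)
  obtain ⟨hf, hb⟩ := ncard_bound h (Cl0 s ()) (fun _ => true) 77 (by decide +kernel)
    (fun y hy => hy) (fun _ _ _ => rfl)
  refine step_main (Cl0 s) (inv0 P.hs) hy0 hf 77 hb ?_
  have hpos := orb_pos (G := L ≃ₐ[K] L) () (a 0) (hf.subset (orb_sub _ (inv0 P.hs) hy0))
  have d7 : 7 ^ (0 + 1) ∣ (orbit (stabilizer (L ≃ₐ[K] L) ()) (a 0)).ncard := by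
    obtain ⟨κ, _, φ, σ, hp⟩ := P.pl 13 2 (by norm_num) sep_13_2
    obtain ⟨gs, c, h1, h2⟩ := cy0_7
    refine step_dvd (Cl0 s) (inv0 P.hs) hy0 hf () (mem_orbit_self _) σ rfl 7 0 (by norm_num) ?_
    intro y hy
    exact place_cyc hp (by norm_num) P.hs 7 1 _ _ _ _ _ _ h1 h2 y hy
      (root_nev hp (by norm_num) y hy) (by simp) (by simp)
  have d11 : 11 ^ (0 + 1) ∣ (orbit (stabilizer (L ≃ₐ[K] L) ()) (a 0)).ncard := by
    obtain ⟨κ, _, φ, σ, hp⟩ := P.pl 13 11 (by norm_num) sep_13_11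
    obtain ⟨gs, c, h1, h2⟩ := cy0_11
    refine step_dvd (Cl0 s) (inv0 P.hs) hy0 hf () (mem_orbit_self _) σ rfl 11 0 (by norm_num) ?_
    intro y hy
    exact place_cyc hp (by norm_num) P.hs 11 1 _ _ _ _ _ _ h1 h2 y hy
      (root_nev hp (by norm_num) y hy) (by simp) (by simp)
  omega

theorem lev1 (P : Places K s) (h : IsBase s a)
    (ho : ∀ t y, t ∈ orbit (L ≃ₐ[K] L) () → y ∈ Cl0 s t → (t, y) ∈ orbit (L ≃ₐ[K] L) ((), a 0)) :
    (∀ t y, t ∈ orbit (L ≃ₐ[K] L) ((), a 0) → y ∈ Cl1 s t →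
      (t, y) ∈ orbit (L ≃ₐ[K] L) (((), a 0), a 2)) ∧
    Nat.card (stabilizer (L ≃ₐ[K] L) ((), a 0)) =
      16 * Nat.card (stabilizer (L ≃ₐ[K] L) (((), a 0), a 2)) := by
  have hy0 : a 2 ∈ Cl1 s ((), a 0) :=
    ⟨h.root 2 (by norm_num), (h.adj 0 (by norm_num) 2 (by norm_num)).2 (by decide +kernel)⟩
  obtain ⟨hf, hb⟩ := ncard_bound h (Cl1 s ((), a 0)) (fun i => adjc 0 i) 16 (by decide +kernel)
    (fun y hy => hy.1) (fun i hi hm => (h.adj 0 (by norm_num) i hi).1 hm.2)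
  refine step_main (Cl1 s) (inv1 P.hs) hy0 hf 16 hb ?_
  have hpos := orb_pos (G := L ≃ₐ[K] L) ((), a 0) (a 2) (hf.subset (orb_sub _ (inv1 P.hs) hy0))
  have hle := (Set.ncard_le_ncard (orb_sub _ (inv1 P.hs) hy0) hf).trans hb
  have d8 : 2 ^ (2 + 1) ∣ (orbit (stabilizer (L ≃ₐ[K] L) ((), a 0)) (a 2)).ncard := by
    obtain ⟨κ, _, φ, σ, hp⟩ := P.pl 13 1 (by norm_num) sep_13_1
    obtain ⟨gs, c, h1, h2⟩ := cy1_8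
    obtain ⟨β, r1, r2, r3⟩ := rat_root hp (by norm_num) P.hs 12 (by decide +kernel)
    refine step_dvd (Cl1 s) (inv1 P.hs) hy0 hf ((), β) (ho _ _ (mem_orbit_self _) r1) σ
      (by rw [Prod.smul_mk, r3]) 2 2 (by norm_num) ?_
    intro y hy
    exact place_cyc hp (by norm_num) P.hs 8 4 _ _ _ _ _ _ h1 h2 y hy.1
      ((adj_iff hp (by norm_num) r1 r2 hy.1).1 hy.2) (by simp) (by simp)
  have d5 : 5 ^ (0 + 1) ∣ (orbit (stabilizer (L ≃ₐ[K] L) ((), a 0)) (a 2)).ncard ∨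
      5 ^ (0 + 1) ∣ (orbit (stabilizer (L ≃ₐ[K] L) ((), a 0)) (a 2)).ncard - 1 := by
    obtain ⟨κ, _, φ, σ, hp⟩ := P.pl 13 3 (by norm_num) sep_13_3
    obtain ⟨gs, c, h1, h2⟩ := cy1_5
    obtain ⟨β, r1, r2, r3⟩ := rat_root hp (by norm_num) P.hs 0 (by decide +kernel)
    obtain ⟨β', r1', r2', r3'⟩ := rat_root hp (by norm_num) P.hs 7 (by decide +kernel)
    refine step_dvd_one (Cl1 s) (inv1 P.hs) hy0 hf ((), β) (ho _ _ (mem_orbit_self _) r1) σ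
      (by rw [Prod.smul_mk, r3]) 5 0 (by norm_num) β' r3' ?_
    intro y hy hne
    exact place_cyc hp (by norm_num) P.hs 5 1 _ _ _ _ _ _ h1 h2 y hy.1
      ((adj_iff hp (by norm_num) r1 r2 hy.1).1 hy.2) (by simp)
      (lin_ne hp (by norm_num) r1' r2' hy.1 hne)
  omega

theorem lev2 (P : Places K s) (h : IsBase s a)
    (ho : ∀ t y, t ∈ orbit (L ≃ₐ[K] L) () → y ∈ Cl0 s t → (t, y) ∈ orbit (L ≃ₐ[K] L) ((), a 0))
    (ho1 : ∀ t y, t ∈ orbit (L ≃ₐ[K] L) ((), a 0) → y ∈ Cl1 s t →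
      (t, y) ∈ orbit (L ≃ₐ[K] L) (((), a 0), a 2)) :
    (∀ t y, t ∈ orbit (L ≃ₐ[K] L) (((), a 0), a 2) → y ∈ Cl2 s t →
      (t, y) ∈ orbit (L ≃ₐ[K] L) ((((), a 0), a 2), a 9)) ∧
    Nat.card (stabilizer (L ≃ₐ[K] L) (((), a 0), a 2)) =
      15 * Nat.card (stabilizer (L ≃ₐ[K] L) ((((), a 0), a 2), a 9)) := by
  have hy0 : a 9 ∈ Cl2 s (((), a 0), a 2) :=
    ⟨h.root 9 (by norm_num), (h.adj 0 (by norm_num) 9 (by norm_num)).2 (by decide +kernel),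
      fun e => absurd (h.inj 9 (by norm_num) 2 (by norm_num) e) (by norm_num)⟩
  obtain ⟨hf, hb⟩ := ncard_bound h (Cl2 s (((), a 0), a 2)) (fun i => adjc 0 i && !(i.beq 2)) 15
    (by decide +kernel) (fun y hy => hy.1) (fun i hi hm => by
      rw [Bool.and_eq_true]
      refine ⟨(h.adj 0 (by norm_num) i hi).1 hm.2.1, ?_⟩
      by_contra hc
      simp at hc
      exact hm.2.2 (by rw [hc]))
  refine step_main (Cl2 s) (inv2 P.hs) hy0 hf 15 hb ?_
  have hpos := orb_pos (G := L ≃ₐ[K] L) (((), a 0), a 2) (a 9)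
    (hf.subset (orb_sub _ (inv2 P.hs) hy0))
  have d5 : 5 ^ (0 + 1) ∣ (orbit (stabilizer (L ≃ₐ[K] L) (((), a 0), a 2)) (a 9)).ncard := by
    obtain ⟨κ, _, φ, σ, hp⟩ := P.pl 13 3 (by norm_num) sep_13_3
    obtain ⟨gs, c, h1, h2⟩ := cy1_5
    obtain ⟨β, r1, r2, r3⟩ := rat_root hp (by norm_num) P.hs 0 (by decide +kernel)
    obtain ⟨β', r1', r2', r3'⟩ := rat_root hp (by norm_num) P.hs 7 (by decide +kernel)
    refine step_dvd (Cl2 s) (inv2 P.hs) hy0 hf (((), β), β')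
      (ho1 _ _ (ho _ _ (mem_orbit_self _) r1)
        ⟨r1', (adj_iff' hp (by norm_num) r1 r2 r1' r2').2 (by decide +kernel)⟩) σ
      (by rw [Prod.smul_mk, Prod.smul_mk, r3, r3']) 5 0 (by norm_num) ?_
    intro y hy
    exact place_cyc hp (by norm_num) P.hs 5 1 _ _ _ _ _ _ h1 h2 y hy.1
      ((adj_iff hp (by norm_num) r1 r2 hy.1).1 hy.2.1) (by simp)
      (lin_ne hp (by norm_num) r1' r2' hy.1 hy.2.2)
  have d3 : 3 ^ (0 + 1) ∣ (orbit (stabilizer (L ≃ₐ[K] L) (((), a 0), a 2)) (a 9)).ncard := by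
    obtain ⟨κ, _, φ, σ, hp⟩ := P.pl 19 4 (by norm_num) sep_19_4
    obtain ⟨gs, c, h1, h2⟩ := cy2_3
    obtain ⟨β, r1, r2, r3⟩ := rat_root hp (by norm_num) P.hs 0 (by decide +kernel)
    obtain ⟨β', r1', r2', r3'⟩ := rat_root hp (by norm_num) P.hs 12 (by decide +kernel)
    refine step_dvd (Cl2 s) (inv2 P.hs) hy0 hf (((), β), β')
      (ho1 _ _ (ho _ _ (mem_orbit_self _) r1)
        ⟨r1', (adj_iff' hp (by norm_num) r1 r2 r1' r2').2 (by decide +kernel)⟩) σ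
      (by rw [Prod.smul_mk, Prod.smul_mk, r3, r3']) 3 0 (by norm_num) ?_
    intro y hy
    exact place_cyc hp (by norm_num) P.hs 3 1 _ _ _ _ _ _ h1 h2 y hy.1
      ((adj_iff hp (by norm_num) r1 r2 hy.1).1 hy.2.1) (by simp)
      (lin_ne hp (by norm_num) r1' r2' hy.1 hy.2.2)
  omega

theorem tup3 {κ : Type} [Field κ] {ℓ s0 : ℕ} {φ : L → κ} {σ : L ≃ₐ[K] L}
    (hp : IsPl s ℓ s0 φ σ) (hl : ℓ.Prime) (hs : ∀ g : L ≃ₐ[K] L, g s = s)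
    (ho : ∀ t y, t ∈ orbit (L ≃ₐ[K] L) () → y ∈ Cl0 s t → (t, y) ∈ orbit (L ≃ₐ[K] L) ((), a 0))
    (ho1 : ∀ t y, t ∈ orbit (L ≃ₐ[K] L) ((), a 0) → y ∈ Cl1 s t →
      (t, y) ∈ orbit (L ≃ₐ[K] L) (((), a 0), a 2))
    (ho2 : ∀ t y, t ∈ orbit (L ≃ₐ[K] L) (((), a 0), a 2) → y ∈ Cl2 s t →
      (t, y) ∈ orbit (L ≃ₐ[K] L) ((((), a 0), a 2), a 9))
    (b1 b2 b3 : ℕ) (e1 : (evN ℓ (fN ℓ s0) b1).beq 0 = true)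
    (e2 : (evN ℓ (fN ℓ s0) b2).beq 0 = true) (e3 : (evN ℓ (fN ℓ s0) b3).beq 0 = true)
    (f2 : (evN ℓ (AN ℓ b1) b2 % ℓ).beq 0 = true) (f3 : (evN ℓ (AN ℓ b1) b3 % ℓ).beq 0 = true)
    (g3 : (b3 % ℓ).beq (b2 % ℓ) = false) :
    ∃ t : ((Unit × L) × L) × L, t ∈ orbit (L ≃ₐ[K] L) ((((), a 0), a 2), a 9) ∧ σ • t = t ∧
      (fev s t.1.2 = 0 ∧ φ t.1.2 = (b2 : κ)) ∧ (fev s t.2 = 0 ∧ φ t.2 = (b3 : κ)) := by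
  obtain ⟨β, r1, r2, r3⟩ := rat_root hp hl hs b1 e1
  obtain ⟨β', r1', r2', r3'⟩ := rat_root hp hl hs b2 e2
  obtain ⟨γ, q1, q2, q3⟩ := rat_root hp hl hs b3 e3
  refine ⟨((((), β), β'), γ), ho2 _ _ (ho1 _ _ (ho _ _ (mem_orbit_self _) r1) ⟨r1', ?_⟩)
    ⟨q1, ?_, ?_⟩, ?_, ⟨r1', r2'⟩, ⟨q1, q2⟩⟩
  · exact (adj_iff' hp hl r1 r2 r1' r2').2 f2
  · exact (adj_iff' hp hl r1 r2 q1 q2).2 f3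
  · exact ne_cast hp q2 r2' g3
  · rw [Prod.smul_mk, Prod.smul_mk, Prod.smul_mk, r3, r3', q3]

theorem lev3 (P : Places K s) (h : IsBase s a)
    (ho : ∀ t y, t ∈ orbit (L ≃ₐ[K] L) () → y ∈ Cl0 s t → (t, y) ∈ orbit (L ≃ₐ[K] L) ((), a 0))
    (ho1 : ∀ t y, t ∈ orbit (L ≃ₐ[K] L) ((), a 0) → y ∈ Cl1 s t →
      (t, y) ∈ orbit (L ≃ₐ[K] L) (((), a 0), a 2))
    (ho2 : ∀ t y, t ∈ orbit (L ≃ₐ[K] L) (((), a 0), a 2) → y ∈ Cl2 s t →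
      (t, y) ∈ orbit (L ≃ₐ[K] L) ((((), a 0), a 2), a 9)) :
    (∀ t y, t ∈ orbit (L ≃ₐ[K] L) ((((), a 0), a 2), a 9) → y ∈ Cl3 s t →
      (t, y) ∈ orbit (L ≃ₐ[K] L) (((((), a 0), a 2), a 9), a 11)) ∧
    Nat.card (stabilizer (L ≃ₐ[K] L) ((((), a 0), a 2), a 9)) =
      12 * Nat.card (stabilizer (L ≃ₐ[K] L) (((((), a 0), a 2), a 9), a 11)) := by
  have hy0 : a 11 ∈ Cl3 s ((((), a 0), a 2), a 9) :=
    ⟨h.root 11 (by norm_num), (h.adj 2 (by norm_num) 11 (by norm_num)).2 (by decide +kernel),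
      fun e => absurd ((h.adj 9 (by norm_num) 11 (by norm_num)).1 e) (by decide +kernel)⟩
  obtain ⟨hf, hb⟩ := ncard_bound h (Cl3 s ((((), a 0), a 2), a 9)) (fun i => adjc 2 i && !(adjc 9 i))
    12 (by decide +kernel) (fun y hy => hy.1) (fun i hi hm => by
      rw [Bool.and_eq_true]
      refine ⟨(h.adj 2 (by norm_num) i hi).1 hm.2.1, ?_⟩
      by_contra hc
      simp only [Bool.not_eq_true, Bool.not_eq_false'] at hc
      exact hm.2.2 ((h.adj 9 (by norm_num) i hi).2 hc))
  refine step_main (Cl3 s) (inv3 P.hs) hy0 hf 12 hb ?_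
  have hpos := orb_pos (G := L ≃ₐ[K] L) ((((), a 0), a 2), a 9) (a 11)
    (hf.subset (orb_sub _ (inv3 P.hs) hy0))
  have d3 : 3 ^ (0 + 1) ∣
      (orbit (stabilizer (L ≃ₐ[K] L) ((((), a 0), a 2), a 9)) (a 11)).ncard := by
    obtain ⟨κ, _, φ, σ, hp⟩ := P.pl 19 4 (by norm_num) sep_19_4
    obtain ⟨gs, c, h1, h2⟩ := cy3_3
    obtain ⟨t, ht, hσ, ⟨r1, r2⟩, q1, q2⟩ := tup3 hp (by norm_num) P.hs ho ho1 ho2 12 0 2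
      (by decide +kernel) (by decide +kernel) (by decide +kernel) (by decide +kernel)
      (by decide +kernel) (by decide +kernel)
    refine step_dvd (Cl3 s) (inv3 P.hs) hy0 hf t ht σ hσ 3 0 (by norm_num) ?_
    intro y hy
    exact place_cyc hp (by norm_num) P.hs 3 1 _ _ _ _ _ _ h1 h2 y hy.1
      ((adj_iff hp (by norm_num) r1 r2 hy.1).1 hy.2.1) (by simp)
      (fun e => hy.2.2 ((adj_iff hp (by norm_num) q1 q2 hy.1).2 e))
  have d4 : 2 ^ (1 + 1) ∣
      (orbit (stabilizer (L ≃ₐ[K] L) ((((), a 0), a 2), a 9)) (a 11)).ncard := by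
    obtain ⟨κ, _, φ, σ, hp⟩ := P.pl 23 1 (by norm_num) sep_23_1
    obtain ⟨gs, c, h1, h2⟩ := cy3_4
    obtain ⟨t, ht, hσ, ⟨r1, r2⟩, q1, q2⟩ := tup3 hp (by norm_num) P.hs ho ho1 ho2 1 16 21
      (by decide +kernel) (by decide +kernel) (by decide +kernel) (by decide +kernel)
      (by decide +kernel) (by decide +kernel)
    refine step_dvd (Cl3 s) (inv3 P.hs) hy0 hf t ht σ hσ 2 1 (by norm_num) ?_
    intro y hy
    exact place_cyc hp (by norm_num) P.hs 4 2 _ _ _ _ _ _ h1 h2 y hy.1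
      ((adj_iff hp (by norm_num) r1 r2 hy.1).1 hy.2.1) (by simp)
      (fun e => hy.2.2 ((adj_iff hp (by norm_num) q1 q2 hy.1).2 e))
  omega

end main
section main2
variable {K L : Type} [Field K] [Field L] [Algebra K L] {s : L} {a : ℕ → L}
open MulAction

/-- a nontrivial element of the stabilizer of `t0`, conjugate to a Frobenius element -/
theorem lev4_elt (P : Places K s) (h : IsBase s a)
    (ho3 : ∀ t y, t ∈ orbit (L ≃ₐ[K] L) ((((), a 0), a 2), a 9) → y ∈ Cl3 s t →
      (t, y) ∈ orbit (L ≃ₐ[K] L) (((((), a 0), a 2), a 9), a 11))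
    {κ : Type} [Field κ] {ℓ s0 : ℕ} {φ : L → κ} {σ : L ≃ₐ[K] L}
    (hp : IsPl s ℓ s0 φ σ) (hl : ℓ.Prime) (b3 b4 : ℕ) (t : ((Unit × L) × L) × L)
    (ht : t ∈ orbit (L ≃ₐ[K] L) ((((), a 0), a 2), a 9)) (hσ : σ • t = t)
    (q1 : fev s t.2 = 0) (q2 : φ t.2 = (b3 : κ))
    (e4 : (evN ℓ (fN ℓ s0) b4).beq 0 = true)
    (f4 : ∀ γ, fev s γ = 0 → φ γ = (b4 : κ) → ev2 AL t.1.2 γ = 0 ∧ ev2 AL t.2 γ ≠ 0)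
    (hcy : ∃ gs c d, splitC ℓ gs [1] (AN ℓ b3) c (AN ℓ b4) d = true ∧ cycC ℓ 2 1 gs = true) :
    2 ^ (0 + 1) ∣ (orbit (stabilizer (L ≃ₐ[K] L) (((((), a 0), a 2), a 9), a 11)) (a 4)).ncard ∧
    σ ≠ 1 ∧ ∃ g : L ≃ₐ[K] L, g⁻¹ * σ * g ∈ stabilizer (L ≃ₐ[K] L) (((((), a 0), a 2), a 9), a 11) := by
  obtain ⟨gs, c, d, h1, h2⟩ := hcy
  have hy0 : a 4 ∈ Cl4 s (((((), a 0), a 2), a 9), a 11) :=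
    ⟨h.root 4 (by norm_num), (h.adj 9 (by norm_num) 4 (by norm_num)).2 (by decide +kernel),
      (h.adj 11 (by norm_num) 4 (by norm_num)).2 (by decide +kernel)⟩
  obtain ⟨hf, hb⟩ := ncard_bound h (Cl4 s (((((), a 0), a 2), a 9), a 11)) (fun _ => true)
    77 (by decide +kernel) (fun y hy => hy.1) (fun i hi hm => rfl)
  obtain ⟨γ, r1, r2, r3⟩ := rat_root hp hl P.hs b4 e4
  have ht4 : (t, γ) ∈ orbit (L ≃ₐ[K] L) (((((), a 0), a 2), a 9), a 11) :=
    ho3 t γ ht ⟨r1, (f4 γ r1 r2).1, (f4 γ r1 r2).2⟩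
  have hσ4 : σ • (t, γ) = (t, γ) := by rw [Prod.smul_mk, hσ, r3]
  have key : ∀ y ∈ Cl4 s (t, γ), σ ^ 2 • y = y ∧ σ ^ 1 • y ≠ y := by
    intro y hy
    exact place_cyc hp hl P.hs 2 1 _ _ _ _ _ _ h1 h2 y hy.1
      ((adj_iff hp hl q1 q2 hy.1).1 hy.2.1)
      ((adj_iff hp hl r1 r2 hy.1).1 hy.2.2) (by simp)
  refine ⟨?_, ?_, ?_⟩
  · exact step_dvd (Cl4 s) (inv4 P.hs) hy0 hf (t, γ) ht4 σ hσ4 2 0 (by norm_num) key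
  · obtain ⟨g, hg⟩ := ht4
    have := inv4 P.hs g _ _ hy0
    have e : g • (((((), a 0), a 2), a 9), a 11) = (t, γ) := hg
    rw [e] at this
    intro hσ1
    apply (key _ this).2
    rw [hσ1]; simp
  · obtain ⟨g, hg⟩ := ht4
    refine ⟨g, ?_⟩
    have e : g • (((((), a 0), a 2), a 9), a 11) = (t, γ) := hg
    rw [mem_stabilizer_iff, mul_smul, mul_smul, e, hσ4, ← e, inv_smul_smul]

def rat379 : List ℕ := [0, 49, 50, 69, 89, 130, 153, 154, 158, 184, 188, 189, 192, 206]

theorem chk_379 : rat379.all (fun b => (evN 379 (fN 379 180) b).beq 0) = true := by decide +kernel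

theorem chk_103 : ((List.range 103).filter
    (fun b => (evN 103 (fN 103 30) b % 103).beq 0)).length ≤ 13 := by decide +kernel

theorem fix_le {κ : Type} [Field κ] {φ : L → κ} {σ : L ≃ₐ[K] L} (P : Places K s)
    (hp : IsPl s 103 30 φ σ) (S : Finset L) (hS : ∀ y ∈ S, fev s y = 0 ∧ σ • y = y) :
    S.card ≤ 13 := by
  classical
  refine le_trans ?_ chk_103
  refine le_trans ?_ (List.toFinset_card_le _)
  have h1 : ∀ y, ∃ b : ℕ, y ∈ S → b < 103 ∧ φ y = (b : κ) ∧
      (evN 103 (fN 103 30) b % 103).beq 0 = true := by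
    intro y
    by_cases hy : y ∈ S
    · obtain ⟨b, h⟩ := fixed_cast hp (by norm_num) P.hs y (hS y hy).1 (hS y hy).2
      exact ⟨b, fun _ => h⟩
    · exact ⟨0, fun h => absurd h hy⟩
  choose f hf using h1
  refine Finset.card_le_card_of_injOn f ?_ ?_
  · intro y hy
    have := hf y (Finset.mem_coe.1 hy)
    rw [Finset.mem_coe, List.mem_toFinset, List.mem_filter, List.mem_range]
    exact ⟨this.1, this.2.2⟩
  · intro y hy z hz e
    have e1 := (hf y (Finset.mem_coe.1 hy)).2.1
    have e2 := (hf z (Finset.mem_coe.1 hz)).2.1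
    rw [e, ← e2] at e1
    exact hp.inj _ _ (hS y hy).1 (hS z hz).1 e1

theorem fix_ge {κ : Type} [Field κ] {φ : L → κ} {σ : L ≃ₐ[K] L} (P : Places K s)
    (hp : IsPl s 379 180 φ σ) :
    ∃ S : Finset L, (∀ y ∈ S, fev s y = 0 ∧ σ • y = y) ∧ S.card = 14 := by
  classical
  have h1 : ∀ b, ∃ β, b ∈ rat379 → fev s β = 0 ∧ φ β = (b : κ) ∧ σ • β = β := by
    intro b
    by_cases hb : b ∈ rat379
    · obtain ⟨β, h⟩ := rat_root hp (by norm_num) P.hs b (List.all_eq_true.1 chk_379 b hb)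
      exact ⟨β, fun _ => h⟩
    · exact ⟨0, fun h => absurd h hb⟩
  choose f hf using h1
  refine ⟨rat379.toFinset.image f, ?_, ?_⟩
  · intro y hy
    obtain ⟨b, hb, rfl⟩ := Finset.mem_image.1 hy
    have := hf b (List.mem_toFinset.1 hb)
    exact ⟨this.1, this.2.2⟩
  · rw [Finset.card_image_of_injOn]
    · decide +kernel
    · intro b hb c hc e
      have hb := List.mem_toFinset.1 (Finset.mem_coe.1 hb)
      have hc := List.mem_toFinset.1 (Finset.mem_coe.1 hc)
      by_contra hne
      have hlt : ∀ x ∈ rat379, x % 379 = x := by decide +kernel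
      refine ne_cast hp (hf b hb).2.1 (hf c hc).2.1 ?_ e
      rw [hlt b hb, hlt c hc]
      by_contra h'
      rw [Bool.not_eq_false] at h'
      exact hne (Nat.eq_of_beq_eq_true h')

theorem lev4 (P : Places K s) (h : IsBase s a) [Finite (L ≃ₐ[K] L)]
    (hgen : ∀ g : L ≃ₐ[K] L, (∀ y, fev s y = 0 → g y = y) → g = 1)
    (ho : ∀ t y, t ∈ orbit (L ≃ₐ[K] L) () → y ∈ Cl0 s t → (t, y) ∈ orbit (L ≃ₐ[K] L) ((), a 0))
    (ho1 : ∀ t y, t ∈ orbit (L ≃ₐ[K] L) ((), a 0) → y ∈ Cl1 s t →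
      (t, y) ∈ orbit (L ≃ₐ[K] L) (((), a 0), a 2))
    (ho2 : ∀ t y, t ∈ orbit (L ≃ₐ[K] L) (((), a 0), a 2) → y ∈ Cl2 s t →
      (t, y) ∈ orbit (L ≃ₐ[K] L) ((((), a 0), a 2), a 9))
    (ho3 : ∀ t y, t ∈ orbit (L ≃ₐ[K] L) ((((), a 0), a 2), a 9) → y ∈ Cl3 s t →
      (t, y) ∈ orbit (L ≃ₐ[K] L) (((((), a 0), a 2), a 9), a 11)) :
    Nat.card (stabilizer (L ≃ₐ[K] L) (((((), a 0), a 2), a 9), a 11)) = 4 := by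
  have hy0 : a 4 ∈ Cl4 s (((((), a 0), a 2), a 9), a 11) :=
    ⟨h.root 4 (by norm_num), (h.adj 9 (by norm_num) 4 (by norm_num)).2 (by decide +kernel),
      (h.adj 11 (by norm_num) 4 (by norm_num)).2 (by decide +kernel)⟩
  obtain ⟨hf, hb⟩ := ncard_bound h (Cl4 s (((((), a 0), a 2), a 9), a 11))
    (fun i => adjc 9 i && adjc 11 i)
    4 (by decide +kernel) (fun y hy => hy.1) (fun i hi hm => by
      rw [Bool.and_eq_true]
      exact ⟨(h.adj 9 (by norm_num) i hi).1 hm.2.1, (h.adj 11 (by norm_num) i hi).1 hm.2.2⟩)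
  have hle := (Set.ncard_le_ncard (orb_sub _ (inv4 P.hs) hy0) hf).trans hb
  have htriv : Nat.card (stabilizer (L ≃ₐ[K] L) ((((((), a 0), a 2), a 9), a 11), a 4)) = 1 := by
    rw [Nat.card_eq_one_iff_unique]
    refine ⟨⟨fun x y => ?_⟩, ⟨1⟩⟩
    have key : ∀ g ∈ stabilizer (L ≃ₐ[K] L) ((((((), a 0), a 2), a 9), a 11), a 4), g = 1 := by
      intro g hg
      rw [mem_stabilizer_iff] at hg
      simp only [Prod.smul_mk, Prod.mk.injEq] at hg
      obtain ⟨⟨⟨⟨⟨-, g0⟩, g2⟩, g9⟩, g11⟩, g4⟩ := hg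
      apply hgen
      apply stab_triv h P.hs
      intro i hi
      simp only [List.mem_cons, List.not_mem_nil, or_false] at hi
      rcases hi with rfl | rfl | rfl | rfl | rfl <;> assumption
    exact Subtype.ext ((key _ x.2).trans (key _ y.2).symm)
  have hcard := card_step (G := L ≃ₐ[K] L) (((((), a 0), a 2), a 9), a 11) (a 4)
  rw [htriv, mul_one] at hcard
  obtain ⟨κ, _, φ, σ, hp⟩ := P.pl 103 30 (by norm_num) sep_103_30
  obtain ⟨κ', _, φ', σ', hp'⟩ := P.pl 379 180 (by norm_num) sep_379_180
  have A1 : 2 ^ (0 + 1) ∣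
      (orbit (stabilizer (L ≃ₐ[K] L) (((((), a 0), a 2), a 9), a 11)) (a 4)).ncard ∧ σ ≠ 1 ∧
      ∃ g : L ≃ₐ[K] L, g⁻¹ * σ * g ∈ stabilizer (L ≃ₐ[K] L) (((((), a 0), a 2), a 9), a 11) := by
    obtain ⟨t, ht, hσ, ⟨r1, r2⟩, q1, q2⟩ := tup3 hp (by norm_num) P.hs ho ho1 ho2 12 27 67
      (by decide +kernel) (by decide +kernel) (by decide +kernel) (by decide +kernel)
      (by decide +kernel) (by decide +kernel)
    refine lev4_elt P h ho3 hp (by norm_num) 67 20 t ht hσ q1 q2 (by decide +kernel) ?_ cy4_a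
    intro γ g1 g2
    rw [Ne, adj_iff' hp (by norm_num) r1 r2 g1 g2, adj_iff' hp (by norm_num) q1 q2 g1 g2]
    decide +kernel
  have A2 : 2 ^ (0 + 1) ∣
      (orbit (stabilizer (L ≃ₐ[K] L) (((((), a 0), a 2), a 9), a 11)) (a 4)).ncard ∧ σ' ≠ 1 ∧
      ∃ g : L ≃ₐ[K] L, g⁻¹ * σ' * g ∈ stabilizer (L ≃ₐ[K] L) (((((), a 0), a 2), a 9), a 11) := by
    obtain ⟨t, ht, hσ, ⟨r1, r2⟩, q1, q2⟩ := tup3 hp' (by norm_num) P.hs ho ho1 ho2 0 50 158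
      (by decide +kernel) (by decide +kernel) (by decide +kernel) (by decide +kernel)
      (by decide +kernel) (by decide +kernel)
    refine lev4_elt P h ho3 hp' (by norm_num) 158 89 t ht hσ q1 q2 (by decide +kernel) ?_ cy4_b
    intro γ g1 g2
    rw [Ne, adj_iff' hp' (by norm_num) r1 r2 g1 g2, adj_iff' hp' (by norm_num) q1 q2 g1 g2]
    decide +kernel
  obtain ⟨dv, n1, g, hg⟩ := A1
  obtain ⟨-, n2, g', hg'⟩ := A2
  have hne : g⁻¹ * σ * g ≠ g'⁻¹ * σ' * g' := by
    intro e
    classical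
    obtain ⟨S, hS, hc⟩ := fix_ge P hp'
    have hσ : σ = (g * g'⁻¹) * σ' * (g * g'⁻¹)⁻¹ := by
      have : σ = g * (g⁻¹ * σ * g) * g⁻¹ := by group
      rw [this, e]; group
    have := fix_le P hp (S.image (fun y => (g * g'⁻¹) • y)) (by
      intro y hy
      obtain ⟨z, hz, rfl⟩ := Finset.mem_image.1 hy
      refine ⟨pow_root P.hs _ _ (hS z hz).1, ?_⟩
      rw [hσ, mul_smul, inv_smul_smul, mul_smul, (hS z hz).2])
    rw [Finset.card_image_of_injective _ (MulAction.injective _), hc] at this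
    omega
  have h3 : 3 ≤ Nat.card (stabilizer (L ≃ₐ[K] L) (((((), a 0), a 2), a 9), a 11)) := by
    classical
    let S : Finset (stabilizer (L ≃ₐ[K] L) (((((), a 0), a 2), a 9), a 11)) :=
      {1, ⟨_, hg⟩, ⟨_, hg'⟩}
    have hS : S.card = 3 := by
      apply Finset.card_eq_three.2
      refine ⟨_, _, _, ?_, ?_, ?_, rfl⟩
      · intro e
        have e' : (1 : L ≃ₐ[K] L) = g⁻¹ * σ * g := congrArg Subtype.val e
        apply n1
        have : σ = g * (g⁻¹ * σ * g) * g⁻¹ := by group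
        rw [this, ← e']; group
      · intro e
        have e' : (1 : L ≃ₐ[K] L) = g'⁻¹ * σ' * g' := congrArg Subtype.val e
        apply n2
        have : σ' = g' * (g'⁻¹ * σ' * g') * g'⁻¹ := by group
        rw [this, ← e']; group
      · intro e
        exact hne (congrArg Subtype.val e)
    have := Fintype.ofFinite (stabilizer (L ≃ₐ[K] L) (((((), a 0), a 2), a 9), a 11))
    rw [← hS, Nat.card_eq_fintype_card]
    exact Finset.card_le_univ S
  rw [hcard] at h3 ⊢
  omega

theorem total (P : Places K s) [Finite (L ≃ₐ[K] L)]
    (hgen : ∀ g : L ≃ₐ[K] L, (∀ y, fev s y = 0 → g y = y) → g = 1) :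
    ∃ S : Finset L, S.card = 77 ∧ ∃ y0 ∈ S, fev s y0 = 0 ∧
      (∀ y ∈ S, ∃ g : L ≃ₐ[K] L, g y0 = y) ∧ Nat.card (L ≃ₐ[K] L) = 887040 := by
  classical
  obtain ⟨κ, _, φ, σ, hp⟩ := P.pl 5273 3090 (by norm_num) sep_5273_3090
  obtain ⟨a, h⟩ := base_exists hp (by norm_num) P.hs
  obtain ⟨ho, c0⟩ := lev0 P h
  obtain ⟨ho1, c1⟩ := lev1 P h ho
  obtain ⟨ho2, c2⟩ := lev2 P h ho ho1
  obtain ⟨ho3, c3⟩ := lev3 P h ho ho1 ho2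
  have c4 := lev4 P h hgen ho ho1 ho2 ho3
  refine ⟨(Finset.range 77).image a, ?_, a 0, ?_, h.root 0 (by norm_num), ?_, ?_⟩
  · rw [Finset.card_image_of_injOn, Finset.card_range]
    intro i hi j hj e
    exact h.inj i (Finset.mem_range.1 hi) j (Finset.mem_range.1 hj) e
  · exact Finset.mem_image.2 ⟨0, by simp, rfl⟩
  · intro y hy
    obtain ⟨i, hi, rfl⟩ := Finset.mem_image.1 hy
    obtain ⟨g, hg⟩ := ho () (a i) (mem_orbit_self _) (h.root i (Finset.mem_range.1 hi))
    exact ⟨g, congrArg Prod.snd hg⟩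
  · have htop : stabilizer (L ≃ₐ[K] L) () = ⊤ := by
      ext g; simp
    rw [htop, Subgroup.card_top] at c0
    rw [c0, c1, c2, c3, c4]

end main2

theorem main_L (K L : Type) [Field K] [Field L] [CharZero K] [Algebra ℤ[X] K]
    [IsFractionRing ℤ[X] K] [Algebra K L]
    (f : K[X]) [IsSplittingField K L f] (c : K) (hc : c ≠ 0)
    (hf : f = C c * fev (C (algebraMap ℤ[X] K X)) X) :
    f.natDegree = 77 ∧ Irreducible f ∧ Nat.card (L ≃ₐ[K] L) = 887040 := by
  classical
  set sK : K := algebraMap ℤ[X] K X with hsK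
  have hcu : IsUnit (C c : K[X]) := isUnit_C.2 hc.isUnit
  have hdeg : f.natDegree = 77 := by
    rw [hf, natDegree_C_mul hc, fev_natDegree]
  have hf0 : f ≠ 0 := by intro h; rw [h] at hdeg; simp at hdeg
  let _ : Algebra ℤ[X] L := ((algebraMap K L).comp (algebraMap ℤ[X] K)).toAlgebra
  have : IsScalarTower ℤ[X] K L := IsScalarTower.of_algebraMap_eq (fun x => rfl)
  have : FiniteDimensional K L := IsSplittingField.finiteDimensional L f
  have : Normal K L := Normal.of_isSplittingField f
  have : IsGalois K L := ⟨⟩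
  set s : L := algebraMap K L sK with hs
  have hmap : f.map (algebraMap K L) = C (algebraMap K L c) * fev (C s) X := by
    rw [hf, Polynomial.map_mul, map_fevX, map_C]
  have hcL : algebraMap K L c ≠ 0 := by simpa using hc
  have hsplit : (fev (C s) (X : L[X])).Splits := by
    have h1 : (f.map (algebraMap K L)).Splits := IsSplittingField.splits L f
    refine h1.of_dvd ?_ ?_
    · exact (Polynomial.map_ne_zero hf0)
    · rw [hmap]; exact dvd_mul_left _ _
  have hroot : ∀ y : L, (f.map (algebraMap K L)).eval y = 0 ↔ fev s y = 0 := by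
    intro y
    rw [hmap, eval_mul, eval_C, eval_fevX]
    simp [hcL]
  have P : Places K s :=
    { pl := fun ℓ s0 hl ⟨u, v, h⟩ => exists_place K L s rfl hsplit ℓ s0 hl u v h
      hs := fun g => g.commutes sK }
  have hgen : ∀ g : L ≃ₐ[K] L, (∀ y, fev s y = 0 → g y = y) → g = 1 := by
    intro g hg
    have h2 : (g : L →ₐ[K] L) = AlgHom.id K L := by
      refine AlgHom.ext_of_adjoin_eq_top (IsSplittingField.adjoin_rootSet L f) ?_
      intro y hy
      have : fev s y = 0 := by
        rw [← hroot, eval_map_algebraMap]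
        exact (mem_rootSet.1 hy).2
      simpa using hg y this
    ext y
    exact DFunLike.congr_fun h2 y
  obtain ⟨S, hS, y0, hy0, hy, hS2, hcard⟩ := total P hgen
  refine ⟨hdeg, ?_, hcard⟩
  have hint : IsIntegral K y0 := Algebra.IsIntegral.isIntegral y0
  have hfy : aeval y0 f = 0 := by
    rw [← eval_map_algebraMap, hroot]; exact hy
  have hdvd : minpoly K y0 ∣ f := minpoly.dvd K y0 hfy
  have hd : 77 ≤ (minpoly K y0).natDegree := by
    rw [← hS]
    refine Polynomial.card_le_degree_of_subset_roots (R := L) (p := (minpoly K y0).map (algebraMap K L)) (Z := S) ?_ |>.trans ?_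
    · intro y hyS
      rw [mem_roots (Polynomial.map_ne_zero (minpoly.ne_zero hint)), IsRoot, eval_map_algebraMap]
      obtain ⟨g, rfl⟩ := hS2 y hyS
      have := aeval_algHom_apply (g : L →ₐ[K] L) y0 (minpoly K y0)
      rw [minpoly.aeval, map_zero] at this
      exact this
    · exact natDegree_map_le
  have hass : Associated (minpoly K y0) f := by
    obtain ⟨k, hk⟩ := hdvd
    have hk0 : k ≠ 0 := by rintro rfl; simp at hk; exact hf0 hk
    have := congrArg natDegree hk
    rw [natDegree_mul (minpoly.ne_zero hint) hk0, hdeg] at this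
    have h0 : k.natDegree = 0 := by omega
    have hu : IsUnit k := isUnit_iff_degree_eq_zero.2 (by rw [degree_eq_natDegree hk0, h0]; rfl)
    exact ⟨hu.unit, by rw [hk]; rfl⟩
  exact hass.irreducible (minpoly.irreducible hint)

theorem main_gen (K : Type) [Field K] [CharZero K] [Algebra ℤ[X] K] [IsFractionRing ℤ[X] K]
    (f : K[X]) (c : K) (hc : c ≠ 0)
    (hf : f = C c * fev (C (algebraMap ℤ[X] K X)) X) :
    f.natDegree = 77 ∧ Irreducible f ∧ Nat.card f.Gal = 887040 :=
  main_L K f.SplittingField f c hc hf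

noncomputable def sT : RatFunc ℚ := RatFunc.X / (2 ^ 22 * (1 - RatFunc.X))

theorem X_ne_C (c : ℚ) : (RatFunc.X : RatFunc ℚ) ≠ RatFunc.C c := by
  intro h
  rw [← RatFunc.algebraMap_X, ← RatFunc.algebraMap_C] at h
  have := RatFunc.algebraMap_injective ℚ h
  exact Polynomial.X_ne_C c this

theorem den_ne : (2 ^ 22 * (1 - RatFunc.X) : RatFunc ℚ) ≠ 0 := by
  refine mul_ne_zero (by norm_num) ?_
  intro h
  refine X_ne_C 1 ?_
  rw [map_one]
  linear_combination -h

theorem sT_eq : (1 + 2 ^ 22 * sT) * RatFunc.X = 2 ^ 22 * sT := by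
  have h := den_ne
  have h' : (1 - RatFunc.X : RatFunc ℚ) ≠ 0 := fun e => h (by rw [e, mul_zero])
  rw [sT]
  field_simp
  ring

theorem sT_ne : (1 + 2 ^ 22 * sT) ≠ 0 := by
  intro h
  have := sT_eq
  rw [h, zero_mul] at this
  rw [← this, add_zero] at h
  exact one_ne_zero h

theorem X_eq : RatFunc.X = 2 ^ 22 * sT / (1 + 2 ^ 22 * sT) := by
  rw [eq_div_iff sT_ne, mul_comm, sT_eq]

theorem sT_tr : Transcendental ℚ sT := by
  suffices h : ¬∃ c, sT = RatFunc.C c by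
    have := RatFunc.transcendental_of_ne_C sT h
    have e : (DivisionRing.toRatAlgebra : Algebra ℚ (RatFunc ℚ)) =
        RatFunc.instAlgebraOfPolynomial ℚ ℚ := Subsingleton.elim _ _
    rw [e]
    exact this
  rintro ⟨c, h⟩
  refine X_ne_C (2 ^ 22 * c / (1 + 2 ^ 22 * c)) ?_
  rw [X_eq, h]
  simp

noncomputable def phi : ℤ[X] →+* RatFunc ℚ := eval₂RingHom (Int.castRingHom _) sT

theorem phi_inj : Function.Injective phi := by
  rw [injective_iff_map_eq_zero]
  intro g hg
  by_contra h
  refine sT_tr ⟨g.map (Int.castRingHom ℚ), ?_, ?_⟩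
  · rwa [Ne, Polynomial.map_eq_zero_iff (RingHom.injective_int _)]
  · rw [aeval_def, eval₂_map]
    have e : (algebraMap ℚ (RatFunc ℚ)).comp (Int.castRingHom ℚ) = Int.castRingHom _ :=
      RingHom.ext_int _ _
    rw [e]
    exact hg

theorem phi_X : phi X = sT := by simp [phi]

theorem phi_frac : @IsFractionRing ℤ[X] _ (RatFunc ℚ) _ phi.toAlgebra := by
  let _ : Algebra ℤ[X] (RatFunc ℚ) := phi.toAlgebra
  have : FaithfulSMul ℤ[X] (RatFunc ℚ) := (faithfulSMul_iff_algebraMap_injective _ _).2 phi_inj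
  apply IsFractionRing.of_field
  let ψ : FractionRing ℤ[X] →+* RatFunc ℚ := IsFractionRing.lift (g := phi) phi_inj
  have hψ : ∀ x, ψ (algebraMap ℤ[X] _ x) = phi x := fun x => IsFractionRing.lift_algebraMap phi_inj x
  have hX : (RatFunc.X : RatFunc ℚ) ∈ ψ.fieldRange := by
    have hs : sT ∈ ψ.fieldRange := ⟨algebraMap ℤ[X] _ X, by rw [hψ, phi_X]⟩
    rw [X_eq]
    have h2 : (2 ^ 22 : RatFunc ℚ) ∈ ψ.fieldRange := pow_mem (ofNat_mem _ 2) _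
    exact div_mem (mul_mem h2 hs) (add_mem (one_mem _) (mul_mem h2 hs))
  have hpoly : ∀ g : ℚ[X], algebraMap ℚ[X] (RatFunc ℚ) g ∈ ψ.fieldRange := by
    intro g
    induction g using Polynomial.induction_on' with
    | add a b ha hb => rw [map_add]; exact add_mem ha hb
    | monomial n a =>
      rw [← C_mul_X_pow_eq_monomial, map_mul, map_pow, RatFunc.algebraMap_X, RatFunc.algebraMap_C]
      refine mul_mem ?_ (pow_mem hX _)
      rw [eq_ratCast]
      exact SubfieldClass.ratCast_mem _ a
  intro z
  have hz : z ∈ ψ.fieldRange := by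
    induction z using RatFunc.induction_on with
    | _ a b hb => exact div_mem (hpoly a) (hpoly b)
  obtain ⟨w, rfl⟩ := hz
  obtain ⟨a, b, hb, rfl⟩ := IsFractionRing.div_surjective (A := ℤ[X]) w
  refine ⟨a, b, ?_⟩
  rw [map_div₀, hψ, hψ]
  rfl

theorem p_ev : p = 2 ^ 22 * ev PL X := by
  rw [P7_eq, p, mul_assoc, ← mul_pow]
  congr 2
  simp only [P7L, ev_cons, ev_nil]
  push_cast
  ring

def r4L : List ℤ := [-2, -16, 7, 2, 1]
def r6aL : List ℤ := [16, 60, -30, 8, 34, 14, 1]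
def r6bL : List ℤ := [-2, -2, -10, 10, 15, 1, 4]
def r6cL : List ℤ := [-8, -8, 92, -136, 71, -29, 16]
def r18L : List ℤ := mulZ r4L (mulZ r6aL r6bL)
def r36L : List ℤ := mulZ (mulZ r18L r18L) r6cL

theorem r_list : rL = (mulZ r36L r36L).map (-11 ^ 4 * ·) := by decide +kernel

theorem r_ev : r = ev rL X := by
  rw [r_list, ev_smul]
  simp only [r36L, r18L, ev_mulZ]
  have h1 : ev r4L (X : ℚ[X]) = X ^ 4 + 2 * X ^ 3 + 7 * X ^ 2 - 16 * X - 2 := by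
    simp only [r4L, ev_cons, ev_nil]; push_cast; ring
  have h2 : ev r6aL (X : ℚ[X]) =
      X ^ 6 + 14 * X ^ 5 + 34 * X ^ 4 + 8 * X ^ 3 - 30 * X ^ 2 + 60 * X + 16 := by
    simp only [r6aL, ev_cons, ev_nil]; push_cast; ring
  have h3 : ev r6bL (X : ℚ[X]) =
      4 * X ^ 6 + X ^ 5 + 15 * X ^ 4 + 10 * X ^ 3 - 10 * X ^ 2 - 2 * X - 2 := by
    simp only [r6bL, ev_cons, ev_nil]; push_cast; ring
  have h4 : ev r6cL (X : ℚ[X]) =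
      16 * X ^ 6 - 29 * X ^ 5 + 71 * X ^ 4 - 136 * X ^ 3 + 92 * X ^ 2 - 8 * X - 8 := by
    simp only [r6cL, ev_cons, ev_nil]; push_cast; ring
  rw [r, ← h1, ← h2, ← h3, ← h4]
  generalize ev r4L (X : ℚ[X]) = a
  generalize ev r6aL (X : ℚ[X]) = b
  generalize ev r6bL (X : ℚ[X]) = c
  generalize ev r6cL (X : ℚ[X]) = d
  push_cast
  ring

theorem F_eq : F = C (2 ^ 22 * (1 - RatFunc.X)) * fev (C sT) X := by
  have hp : p.map (algebraMap ℚ (RatFunc ℚ)) = 2 ^ 22 * ev PL X := by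
    have := map_ev (mapRingHom (algebraMap ℚ (RatFunc ℚ))) PL X
    rw [p_ev, Polynomial.map_mul]
    simp only [coe_mapRingHom, map_X] at this
    rw [this]
    simp
  have hr : r.map (algebraMap ℚ (RatFunc ℚ)) = ev rL X := by
    have := map_ev (mapRingHom (algebraMap ℚ (RatFunc ℚ))) rL X
    simpa only [coe_mapRingHom, map_X, ← r_ev] using this
  rw [F, q, Polynomial.map_sub, hp, hr, fev]
  have h : C (2 ^ 22 * (1 - RatFunc.X)) * C sT = C (RatFunc.X : RatFunc ℚ) := by
    rw [← C_mul, sT, mul_div_cancel₀ _ den_ne]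
  have h' : C (2 ^ 22 * (1 - RatFunc.X) : RatFunc ℚ) = 2 ^ 22 * (1 - C RatFunc.X) := by
    rw [C_mul, C_pow, C_sub, C_1]; rfl
  rw [mul_add, ← mul_assoc, h, h']
  ring

end Bel

theorem belyi_deg77_stmt16 :
    F.natDegree = 77 ∧ Irreducible F ∧ Nat.card F.Gal = 887040 := by
  exact @Bel.main_gen (RatFunc ℚ) _ _ Bel.phi.toAlgebra Bel.phi_frac F _ Bel.den_ne
    (Bel.F_eq.trans (by rw [← Bel.phi_X]; rfl))
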